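/- There exists a universal constant C > 0 such that the following holds for all positive integers n ≥ 2 and d ≥ 2. Given symmetric matrices A_1, ..., A_n ∈ ℝ^{d×d} with ‖A_i‖_op ≤ 1 for all i, there exist signs x ∈ {−1, +1}^n such that ‖∑_{i=1}^n x_i A_i‖_op ≤ C · ((log d)^{1/4} · √n + (log d)^{1/2} · (n d)^{1/4}). In particular, the discrepancy is o(√(n log d)) whenever d = o(n). -/

import Mathlib

open MeasureTheory ProbabilityTheory

/-- Operator norm (largest singular value) of a real matrix, as the norm of the
induced linear map between Euclidean spaces. -/
noncomputable def opNorm {m n : Type*} [Fintype m] [Fintype n] [DecidableEq n]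
    (M : Matrix m n ℝ) : ℝ :=
  ‖LinearMap.toContinuousLinearMap (Matrix.toEuclideanLin M)‖

/-- Squared Frobenius norm of a real matrix. -/
noncomputable def frobNormSq {m n : Type*} [Fintype m] [Fintype n]
    (M : Matrix m n ℝ) : ℝ := ∑ i, ∑ j, (M i j) ^ 2

section GaussSmoothing
variable {E : Type*} [NormedAddCommGroup E] [InnerProductSpace ℝ E] [FiniteDimensional ℝ E]
  [MeasurableSpace E] [BorelSpace E]
variable {F : Type*} [NormedAddCommGroup F] [NormedSpace ℝ F]

lemma gs_integrable (T : E →L[ℝ] F) (c : F) :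
    Integrable (fun g : E => ‖c + T g‖) (stdGaussian E) := by
  have h1 : Integrable (fun g : E => ‖c‖ + ‖T‖ * ‖g‖) (stdGaussian E) :=
    (integrable_const _).add ((IsGaussian.integrable_fun_id.norm).const_mul _)
  refine h1.mono' (by fun_prop : Continuous fun g : E => ‖c + T g‖).aestronglyMeasurable ?_
  refine Filter.Eventually.of_forall fun g => ?_
  rw [norm_norm]
  exact (norm_add_le _ _).trans (by gcongr; exact T.le_opNorm g)

lemma gs_integrable_prod (T S : E →L[ℝ] F) (c : F) :
    Integrable (fun p : E × E => ‖c + T p.1 + S p.2‖) ((stdGaussian E).prod (stdGaussian E)) := by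
  have h0 : Integrable (fun p : E × E => ‖p.1‖) ((stdGaussian E).prod (stdGaussian E)) :=
    (IsGaussian.integrable_fun_id.norm).comp_fst _
  have h0' : Integrable (fun p : E × E => ‖p.2‖) ((stdGaussian E).prod (stdGaussian E)) :=
    (IsGaussian.integrable_fun_id.norm).comp_snd _
  have h1 : Integrable (fun p : E × E => ‖c‖ + ‖T‖ * ‖p.1‖ + ‖S‖ * ‖p.2‖)
      ((stdGaussian E).prod (stdGaussian E)) :=
    ((integrable_const _).add (h0.const_mul _)).add (h0'.const_mul _)
  refine h1.mono'
    (by fun_prop : Continuous fun p : E × E => ‖c + T p.1 + S p.2‖).aestronglyMeasurable ?_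
  refine Filter.Eventually.of_forall fun p => ?_
  rw [norm_norm]
  refine (norm_add_le _ _).trans ?_
  refine add_le_add ((norm_add_le _ _).trans ?_) (S.le_opNorm _)
  gcongr; exact T.le_opNorm _

lemma gs_rotate (T : E →L[ℝ] F) (c : F) (ε : ℝ) :
    ∫ p : E × E, ‖c + T p.1 + (ε • T) p.2‖ ∂((stdGaussian E).prod (stdGaussian E)) =
      ∫ g, ‖c + (√(1 + ε ^ 2) • T) g‖ ∂(stdGaussian E) := by
  have hrot := IsGaussian.map_rotation_eq_self_of_forall_strongDual_eq_zero
    (μ := stdGaussian E) (fun L => integral_strongDual_stdGaussian L) (Real.arctan ε)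
  have h1 : ∫ g, ‖c + (√(1 + ε ^ 2) • T) g‖ ∂(stdGaussian E) =
      ∫ p : E × E, ‖c + (√(1 + ε ^ 2) • T) p.1‖ ∂((stdGaussian E).prod (stdGaussian E)) := by
    rw [integral_fun_fst (fun g : E => ‖c + (√(1 + ε ^ 2) • T) g‖)]
    simp
  rw [h1, ← hrot, integral_map (by fun_prop)
    (by fun_prop : Continuous fun p : E × E => ‖c + (√(1 + ε ^ 2) • T) p.1‖).aestronglyMeasurable]
  rw [hrot]
  congr 1
  ext p
  congr 1
  have hs : √(1 + ε ^ 2) ≠ 0 := by positivity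
  simp only [ContinuousLinearMap.rotation, ContinuousLinearMap.coe_mk', LinearMap.coe_mk,
    AddHom.coe_mk, Real.cos_arctan, Real.sin_arctan, _root_.smul_apply, map_add,
    map_smul, smul_smul]
  rw [div_mul_cancel₀ _ hs, div_mul_cancel₀ _ hs, one_smul, add_assoc]

lemma gs_upper (T : E →L[ℝ] F) (H L : Submodule ℝ E) (hLH : L ≤ H) (c : F) (ε : ℝ) :
    ∫ p : E × E, ‖c + T (H.starProjection p.1) + T (ε • L.starProjection p.2)‖
        ∂((stdGaussian E).prod (stdGaussian E)) ≤
      ∫ g, ‖c + T (H.starProjection g)‖ ∂(stdGaussian E) +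
        ε ^ 2 / 2 * ∫ g, ‖T (H.starProjection g)‖ ∂(stdGaussian E) := by
  set γ := stdGaussian E with hγ
  set A : E →L[ℝ] F := T ∘L H.starProjection with hA
  have hR : γ.map L.reflection = γ := stdGaussian_map L.reflection
  have hi1 := gs_integrable_prod A (ε • A) c
  have hi2 : Integrable (fun p : E × E => ‖c + A p.1 + (ε • A) (L.reflection p.2)‖)
      (γ.prod γ) := by
    have := gs_integrable_prod A ((ε • A) ∘L (L.reflection : E →L[ℝ] E)) c
    simpa using this
  have hi3 : Integrable (fun p : E × E => ‖c + T (H.starProjection p.1) +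
      T (ε • L.starProjection p.2)‖) (γ.prod γ) := by
    have := gs_integrable_prod A (ε • (T ∘L L.starProjection)) c
    simpa [hA] using this
  have hrefl : ∫ p : E × E, ‖c + A p.1 + (ε • A) (L.reflection p.2)‖ ∂(γ.prod γ) =
      ∫ p : E × E, ‖c + A p.1 + (ε • A) p.2‖ ∂(γ.prod γ) := by
    rw [integral_prod _ hi1, integral_prod _ hi2]
    congr 1
    ext g
    have h5 := integral_map (μ := γ) (φ := L.reflection) (by fun_prop)
      (by fun_prop : Continuous fun y : E => ‖c + A g + (ε • A) y‖).aestronglyMeasurable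
    rw [hR] at h5
    exact h5.symm
  have hpt : ∀ p : E × E, ‖c + T (H.starProjection p.1) + T (ε • L.starProjection p.2)‖ ≤
      (1/2) * ‖c + A p.1 + (ε • A) p.2‖ + (1/2) * ‖c + A p.1 + (ε • A) (L.reflection p.2)‖ := by
    intro p
    have hHL : H.starProjection (L.starProjection p.2) = L.starProjection p.2 :=
      Submodule.starProjection_eq_self_iff.2 (hLH (Submodule.starProjection_apply_mem _ _))
    have : c + T (H.starProjection p.1) + T (ε • L.starProjection p.2) =
        (1/2 : ℝ) • (c + A p.1 + (ε • A) p.2) +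
          (1/2 : ℝ) • (c + A p.1 + (ε • A) (L.reflection p.2)) := by
      simp only [hA, Submodule.reflection_apply, _root_.smul_apply,
        ContinuousLinearMap.comp_apply, map_sub, map_smul, map_nsmul, hHL]
      module
    rw [this]
    refine (norm_add_le _ _).trans ?_
    rw [norm_smul, norm_smul, Real.norm_of_nonneg (by norm_num : (0 : ℝ) ≤ 1 / 2)]
  have hs1 : √(1 + ε ^ 2) - 1 ≤ ε ^ 2 / 2 := by
    have : √(1 + ε ^ 2) ≤ 1 + ε ^ 2 / 2 := by
      rw [Real.sqrt_le_left (by positivity)]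
      nlinarith [sq_nonneg (ε ^ 2)]
    linarith
  have hs0 : 0 ≤ √(1 + ε ^ 2) - 1 := by
    have : 1 ≤ √(1 + ε ^ 2) := by
      rw [Real.one_le_sqrt]; nlinarith [sq_nonneg ε]
    linarith
  calc _ ≤ ∫ p : E × E, ((1/2) * ‖c + A p.1 + (ε • A) p.2‖ +
        (1/2) * ‖c + A p.1 + (ε • A) (L.reflection p.2)‖) ∂(γ.prod γ) :=
        integral_mono hi3 ((hi1.const_mul _).add (hi2.const_mul _)) hpt
    _ = ∫ p : E × E, ‖c + A p.1 + (ε • A) p.2‖ ∂(γ.prod γ) := by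
        rw [integral_add (hi1.const_mul _) (hi2.const_mul _), integral_const_mul,
          integral_const_mul, hrefl]
        ring
    _ = ∫ g, ‖c + (√(1 + ε ^ 2) • A) g‖ ∂γ := gs_rotate A c ε
    _ ≤ ∫ g, (‖c + A g‖ + ε ^ 2 / 2 * ‖A g‖) ∂γ := by
        refine integral_mono (gs_integrable _ _) ((gs_integrable _ _).add
          (Integrable.const_mul (by simpa using gs_integrable A 0) _)) fun g => ?_
        have : c + (√(1 + ε ^ 2) • A) g = (c + A g) + (√(1 + ε ^ 2) - 1) • A g := by
          simp only [_root_.smul_apply]; module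
        simp only [this]
        refine (norm_add_le _ _).trans ?_
        rw [norm_smul, Real.norm_of_nonneg hs0]
        gcongr
    _ = _ := by
        rw [integral_add (gs_integrable _ _)
          (Integrable.const_mul (by simpa using gs_integrable A 0) _), integral_const_mul]
        rfl

lemma gs_norm_proj_sq (L : Submodule ℝ E) :
    Integrable (fun g => ‖L.starProjection g‖ ^ 2) (stdGaussian E) ∧
    ∫ g, ‖L.starProjection g‖ ^ 2 ∂(stdGaussian E) = Module.finrank ℝ L := by
  have hm : MemLp (fun x : E => x) 2 (stdGaussian E) := IsGaussian.memLp_two_fun_id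
  have hid : ∫ x, id x ∂(stdGaussian E) = 0 := integral_id_stdGaussian
  have hinteg : ∀ u : E, Integrable (fun g => inner ℝ u g * inner ℝ u g) (stdGaussian E) := by
    intro u
    exact (hm.const_inner u).integrable_mul (hm.const_inner u)
  have hval : ∀ u : E, ∫ g, inner ℝ u g * inner ℝ u g ∂(stdGaussian E) = ‖u‖ ^ 2 := by
    intro u
    have := covarianceBilin_apply (μ := stdGaussian E) hm u u
    rw [hid] at this
    simp only [sub_zero] at this
    rw [← this, covarianceBilin_stdGaussian, innerSL_apply_apply, real_inner_self_eq_norm_sq]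
  let b := stdOrthonormalBasis ℝ L
  have hexp : ∀ g : E, ‖L.starProjection g‖ ^ 2 =
      ∑ i, inner ℝ (b i : E) g * inner ℝ (b i : E) g := by
    intro g
    have h1 : ‖L.starProjection g‖ = ‖L.orthogonalProjectionOnto g‖ := by
      rw [Submodule.starProjection_apply, Submodule.coe_norm]
    rw [h1, ← b.sum_sq_norm_inner_right]
    refine Finset.sum_congr rfl fun i _ => ?_
    rw [Submodule.inner_orthogonalProjectionOnto_eq_of_mem_left, Real.norm_eq_abs, sq_abs, sq]
  simp_rw [hexp]
  refine ⟨integrable_finsetSum _ fun i _ => hinteg _, ?_⟩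
  rw [integral_finsetSum _ fun i _ => hinteg _]
  rw [Finset.sum_congr rfl fun i _ => hval (b i : E)]
  have h1 : ∀ i, ‖(b i : E)‖ ^ 2 = 1 := fun i => by
    rw [← Submodule.coe_norm, b.orthonormal.1 i, one_pow]
  rw [Finset.sum_congr rfl fun i _ => h1 i]
  rw [Finset.sum_const, Finset.card_univ, Fintype.card_fin, nsmul_eq_mul, mul_one]

lemma gs_second_order (T : E →L[ℝ] F) (H L : Submodule ℝ E) (hLH : L ≤ H) (x : E)
    (lam δ : ℝ) (hδ : 0 < δ)
    (hmin : ∀ h ∈ L, ‖h‖ ≤ δ →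
      ∫ g, ‖T x + T (H.starProjection g)‖ ∂(stdGaussian E) - lam * ‖x‖ ^ 2 ≤
      ∫ g, ‖T (x + h) + T (H.starProjection g)‖ ∂(stdGaussian E) - lam * ‖x + h‖ ^ 2) :
    2 * lam * Module.finrank ℝ L ≤ ∫ g, ‖T (H.starProjection g)‖ ∂(stdGaussian E) := by
  set γ := stdGaussian E with hγ
  set R := ∫ g, ‖T (H.starProjection g)‖ ∂γ with hR
  set A : E →L[ℝ] F := T ∘L H.starProjection with hA
  let φ : E → ℝ := fun y => ∫ g, ‖T y + A g‖ ∂γ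
  obtain ⟨hL1, hL2⟩ := gs_norm_proj_sq (E := E) L
  -- convexity
  have hconv : ∀ h : E, 2 * φ x ≤ φ (x + h) + φ (x - h) := by
    intro h
    show 2 * ∫ g, ‖T x + A g‖ ∂γ ≤ ∫ g, ‖T (x + h) + A g‖ ∂γ + ∫ g, ‖T (x - h) + A g‖ ∂γ
    rw [← integral_const_mul, ← integral_add (gs_integrable _ _) (gs_integrable _ _)]
    refine integral_mono ((gs_integrable _ _).const_mul _)
      ((gs_integrable _ _).add (gs_integrable _ _)) fun g => ?_
    have : (2 : ℝ) • (T x + A g) = (T (x + h) + A g) + (T (x - h) + A g) := by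
      simp only [map_add, map_sub]; module
    calc 2 * ‖T x + A g‖ = ‖(2 : ℝ) • (T x + A g)‖ := by
          rw [norm_smul, Real.norm_of_nonneg (by norm_num : (0 : ℝ) ≤ 2)]
      _ ≤ _ := by rw [this]; exact norm_add_le _ _
  -- upper bound
  have hup : ∀ ε : ℝ, Integrable (fun g' => φ (x + ε • L.starProjection g')) γ ∧
      ∫ g', φ (x + ε • L.starProjection g') ∂γ ≤ φ x + ε ^ 2 / 2 * R := by
    intro ε
    have hi3 : Integrable (fun p : E × E => ‖T x + T (H.starProjection p.1) +
        T (ε • L.starProjection p.2)‖) (γ.prod γ) := by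
      have := gs_integrable_prod A (ε • (T ∘L L.starProjection)) (T x)
      simpa [hA] using this
    have hfe : ∀ g', φ (x + ε • L.starProjection g') =
        ∫ g, ‖T x + T (H.starProjection g) + T (ε • L.starProjection g')‖ ∂γ := by
      intro g'
      show ∫ g, ‖T (x + ε • L.starProjection g') + A g‖ ∂γ = _
      congr 1
      ext g
      rw [map_add]
      congr 1
      simp only [hA, ContinuousLinearMap.comp_apply]
      abel
    simp_rw [hfe]
    refine ⟨hi3.integral_prod_right, ?_⟩
    rw [← integral_prod_symm _ hi3]
    exact gs_upper T H L hLH (T x) ε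
  -- main bound for each ε
  have key : ∀ ε : ℝ, 0 < ε →
      ∫ g', 2 * lam * ({g' : E | ‖ε • L.starProjection g'‖ ≤ δ}.indicator
        (fun g' => ‖L.starProjection g'‖ ^ 2) g') ∂γ ≤ R := by
    intro ε hε
    have hmeas : MeasurableSet {g' : E | ‖ε • L.starProjection g'‖ ≤ δ} :=
      (isClosed_le (by fun_prop) continuous_const).measurableSet
    obtain ⟨h1, h1'⟩ := hup ε
    obtain ⟨h2, h2'⟩ := hup (-ε)
    have hI : Integrable (fun g' => ε ^ 2 * (2 * lam * ({g' : E | ‖ε • L.starProjection g'‖ ≤ δ}.indicator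
        (fun g' => ‖L.starProjection g'‖ ^ 2) g'))) γ :=
      ((hL1.indicator hmeas).const_mul _).const_mul _
    have hle : ∫ g', ε ^ 2 * (2 * lam * ({g' : E | ‖ε • L.starProjection g'‖ ≤ δ}.indicator
        (fun g' => ‖L.starProjection g'‖ ^ 2) g')) ∂γ ≤
        ∫ g', (φ (x + ε • L.starProjection g') + φ (x + (-ε) • L.starProjection g') - 2 * φ x) ∂γ := by
      refine integral_mono hI ((h1.add h2).sub (integrable_const _)) fun g' => ?_
      simp only
      have hneg : x + (-ε) • L.starProjection g' = x - ε • L.starProjection g' := by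
        rw [neg_smul, sub_eq_add_neg]
      rw [hneg]
      set h := ε • L.starProjection g' with hh
      have hmem : h ∈ L := L.smul_mem _ (Submodule.starProjection_apply_mem _ _)
      by_cases hc : ‖h‖ ≤ δ
      · have e1 := hmin h hmem hc
        have e2 := hmin (-h) (L.neg_mem hmem) (by rwa [norm_neg])
        rw [← sub_eq_add_neg] at e2
        rw [Set.indicator_of_mem (by exact hc)]
        have hpar := parallelogram_law_with_norm ℝ x h
        have hnh : ‖h‖ ^ 2 = ε ^ 2 * ‖L.starProjection g'‖ ^ 2 := by
          rw [hh, norm_smul, mul_pow, Real.norm_eq_abs, sq_abs]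
        have e1' : φ x - lam * ‖x‖ ^ 2 ≤ φ (x + h) - lam * ‖x + h‖ ^ 2 := e1
        have e2' : φ x - lam * ‖x‖ ^ 2 ≤ φ (x - h) - lam * ‖x - h‖ ^ 2 := e2
        have : ε ^ 2 * (2 * lam * ‖L.starProjection g'‖ ^ 2) =
            lam * ‖x + h‖ ^ 2 + lam * ‖x - h‖ ^ 2 - 2 * (lam * ‖x‖ ^ 2) := by
          have h3 : ‖x + h‖ ^ 2 + ‖x - h‖ ^ 2 = 2 * (‖x‖ ^ 2 + ‖h‖ ^ 2) := hpar
          calc _ = 2 * lam * ‖h‖ ^ 2 := by rw [hnh]; ring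
            _ = lam * (‖x + h‖ ^ 2 + ‖x - h‖ ^ 2) - 2 * (lam * ‖x‖ ^ 2) := by rw [h3]; ring
            _ = _ := by ring
        linarith
      · rw [Set.indicator_of_notMem (by exact hc)]
        have := hconv h
        linarith
    have he : ∫ g', (φ (x + ε • L.starProjection g') + φ (x + (-ε) • L.starProjection g') - 2 * φ x) ∂γ
        ≤ ε ^ 2 * R := by
      have h12 : Integrable (fun g' => φ (x + ε • L.starProjection g') +
          φ (x + (-ε) • L.starProjection g')) γ := h1.add h2
      rw [integral_sub h12 (integrable_const _), integral_add h1 h2]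
      simp only [integral_const, probReal_univ, one_smul]
      rw [neg_sq] at h2'
      linarith
    rw [integral_const_mul] at hle
    have h3 := hle.trans he
    exact le_of_mul_le_mul_left h3 (by positivity)
  -- limit
  have hlim : Filter.Tendsto (fun k : ℕ =>
      ∫ g', 2 * lam * ({g' : E | ‖(1 / ((k : ℝ) + 1)) • L.starProjection g'‖ ≤ δ}.indicator
        (fun g' => ‖L.starProjection g'‖ ^ 2) g') ∂γ) Filter.atTop
      (nhds (∫ g', 2 * lam * ‖L.starProjection g'‖ ^ 2 ∂γ)) := by
    refine tendsto_integral_of_dominated_convergence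
      (fun g' => |2 * lam| * ‖L.starProjection g'‖ ^ 2) ?_ (hL1.const_mul _) ?_ ?_
    · intro k
      have hmeas : MeasurableSet {g' : E | ‖(1 / ((k : ℝ) + 1)) • L.starProjection g'‖ ≤ δ} :=
        (isClosed_le (by fun_prop) continuous_const).measurableSet
      exact ((hL1.indicator hmeas).const_mul _).aestronglyMeasurable
    · intro k
      refine Filter.Eventually.of_forall fun g' => ?_
      rw [norm_mul, Real.norm_eq_abs]
      refine mul_le_mul_of_nonneg_left ?_ (abs_nonneg _)
      refine (norm_indicator_le_norm_self _ _).trans ?_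
      simp
    · refine Filter.Eventually.of_forall fun g' => ?_
      refine Filter.Tendsto.congr' ?_ tendsto_const_nhds
      have ht : Filter.Tendsto (fun k : ℕ => ‖(1 / ((k : ℝ) + 1)) • L.starProjection g'‖)
          Filter.atTop (nhds 0) := by
        have := (tendsto_one_div_add_atTop_nhds_zero_nat (𝕜 := ℝ)).smul_const (L.starProjection g')
        simpa using this.norm
      filter_upwards [ht.eventually (ge_mem_nhds hδ)] with k hk
      rw [Set.indicator_of_mem (by exact hk)]
  have hfin : ∫ g', 2 * lam * ‖L.starProjection g'‖ ^ 2 ∂γ ≤ R :=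
    le_of_tendsto' hlim fun k => key _ (by positivity)
  rw [integral_const_mul, hL2] at hfin
  exact hfin

end GaussSmoothing

section PartialColoring
variable {n : ℕ} {F : Type*} [NormedAddCommGroup F] [NormedSpace ℝ F]

lemma pc_lipschitz (T A : EuclideanSpace ℝ (Fin n) →L[ℝ] F) :
    Continuous (fun x : EuclideanSpace ℝ (Fin n) =>
      ∫ g, ‖T x + A g‖ ∂(stdGaussian (EuclideanSpace ℝ (Fin n)))) := by
  have h : LipschitzWith ‖T‖₊ (fun x : EuclideanSpace ℝ (Fin n) =>
      ∫ g, ‖T x + A g‖ ∂(stdGaussian (EuclideanSpace ℝ (Fin n)))) := by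
    refine LipschitzWith.of_le_add_mul _ fun x y => ?_
    have h1 : ∫ g, ‖T x + A g‖ ∂(stdGaussian (EuclideanSpace ℝ (Fin n))) ≤
        ∫ g, (‖T y + A g‖ + ‖T‖ * dist x y) ∂(stdGaussian (EuclideanSpace ℝ (Fin n))) := by
      refine integral_mono (gs_integrable _ _) ((gs_integrable _ _).add (integrable_const _))
        fun g => ?_
      have : T x + A g = (T y + A g) + T (x - y) := by rw [map_sub]; abel
      simp only [this]
      refine (norm_add_le _ _).trans ?_
      gcongr
      rw [dist_eq_norm]
      exact T.le_opNorm _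
    rw [integral_add (gs_integrable _ _) (integrable_const _)] at h1
    simpa using h1
  exact h.continuous

lemma pc_jensen [CompleteSpace F] (T A : EuclideanSpace ℝ (Fin n) →L[ℝ] F) (x : EuclideanSpace ℝ (Fin n)) :
    ‖T x‖ ≤ ∫ g, ‖T x + A g‖ ∂(stdGaussian (EuclideanSpace ℝ (Fin n))) := by
  have h := norm_integral_le_integral_norm (μ := stdGaussian (EuclideanSpace ℝ (Fin n)))
    (fun g => T x + A g)
  have hA : Integrable (fun g => A g) (stdGaussian (EuclideanSpace ℝ (Fin n))) :=
    A.integrable_comp IsGaussian.integrable_fun_id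
  rw [integral_add (integrable_const _) hA, A.integral_comp_comm IsGaussian.integrable_fun_id] at h
  simpa using h

lemma pc_step [CompleteSpace F] (T : EuclideanSpace ℝ (Fin n) →L[ℝ] F) (x0 : EuclideanSpace ℝ (Fin n))
    (hx0 : ∀ i, |x0 i| ≤ 1) (S : Finset (Fin n)) (hS : S.Nonempty)
    (H : Submodule ℝ (EuclideanSpace ℝ (Fin n))) (hH : ∀ y ∈ H, ∀ i, i ∉ S → y i = 0)
    (hdim : 9 * S.card ≤ 10 * Module.finrank ℝ H) (R : ℝ) (hR : 0 < R)
    (hER : ∫ g, ‖T (H.starProjection g)‖ ∂(stdGaussian (EuclideanSpace ℝ (Fin n))) ≤ R) :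
    ∃ x : EuclideanSpace ℝ (Fin n), (∀ i, |x i| ≤ 1) ∧ (∀ i, i ∉ S → x i = x0 i) ∧
      2 * (S.filter (fun i => |x i| < 1)).card ≤ S.card ∧ ‖T x‖ ≤ ‖T x0‖ + 3 * R := by
  classical
  set A : EuclideanSpace ℝ (Fin n) →L[ℝ] F := T ∘L H.starProjection with hA
  let φ : EuclideanSpace ℝ (Fin n) → ℝ := fun y => ∫ g, ‖T y + A g‖ ∂(stdGaussian (EuclideanSpace ℝ (Fin n)))
  have hφ : Continuous φ := pc_lipschitz T A
  have hcard : (0 : ℝ) < S.card := by exact_mod_cast hS.card_pos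
  set lam : ℝ := 2 * R / S.card with hlam
  let K : Set (EuclideanSpace ℝ (Fin n)) := {x | ∀ i, |x i| ≤ 1 ∧ (i ∉ S → x i = x0 i)}
  have hKclosed : IsClosed K := by
    have : K = ⋂ i, ({x : EuclideanSpace ℝ (Fin n) | |x i| ≤ 1} ∩ {x : EuclideanSpace ℝ (Fin n) | i ∉ S → x i = x0 i}) := by
      ext x; simp [K]
    rw [this]
    refine isClosed_iInter fun i => IsClosed.inter (isClosed_le (by fun_prop) continuous_const) ?_
    by_cases hi : i ∈ S
    · simp [hi]
    · simp only [hi, not_false_eq_true, forall_const]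
      exact isClosed_eq (by fun_prop) continuous_const
  have hKb : Bornology.IsBounded K := by
    refine (Metric.isBounded_iff_subset_closedBall 0).2 ⟨√n, fun x hx => ?_⟩
    rw [mem_closedBall_zero_iff, EuclideanSpace.norm_eq]
    refine Real.sqrt_le_sqrt ?_
    calc ∑ i, ‖x i‖ ^ 2 ≤ ∑ i : Fin n, (1 : ℝ) := by
          refine Finset.sum_le_sum fun i _ => ?_
          have := (hx i).1
          rw [Real.norm_eq_abs]
          exact pow_le_one₀ (abs_nonneg _) this
      _ = n := by simp
  have hKc : IsCompact K := Metric.isCompact_of_isClosed_isBounded hKclosed hKb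
  have hKx0 : x0 ∈ K := fun i => ⟨hx0 i, fun _ => rfl⟩
  obtain ⟨x, hxK, hxmin⟩ := hKc.exists_isMinOn ⟨x0, hKx0⟩
    (f := fun y => φ y - lam * ‖y‖ ^ 2) (by fun_prop)
  have hxmin' : ∀ y ∈ K, φ x - lam * ‖x‖ ^ 2 ≤ φ y - lam * ‖y‖ ^ 2 := fun y hy => hxmin hy
  refine ⟨x, fun i => (hxK i).1, fun i => (hxK i).2, ?_, ?_⟩
  · by_contra hcon
    push Not at hcon
    set S' := S.filter (fun i => |x i| < 1) with hS'
    have hS'ne : S'.Nonempty := by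
      rw [← Finset.card_pos]; omega
    let ℓ : EuclideanSpace ℝ (Fin n) →ₗ[ℝ] ((S \ S' : Finset (Fin n)) → ℝ) :=
      { toFun := fun y i => y i
        map_add' := fun _ _ => rfl
        map_smul' := fun _ _ => rfl }
    let L : Submodule ℝ (EuclideanSpace ℝ (Fin n)) := H ⊓ LinearMap.ker ℓ
    have hLsupp : ∀ h ∈ L, ∀ i, i ∉ S' → h i = 0 := by
      intro h hh i hi
      by_cases hiS : i ∈ S
      · have := hh.2
        have h2 : ℓ h = 0 := LinearMap.mem_ker.1 this
        exact congrFun h2 ⟨i, Finset.mem_sdiff.2 ⟨hiS, hi⟩⟩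
      · exact hH h hh.1 i hiS
    have hLdim : Module.finrank ℝ H + S'.card ≤ Module.finrank ℝ L + S.card := by
      have h1 := Submodule.finrank_sup_add_finrank_inf_eq H (LinearMap.ker ℓ)
      have h2 := LinearMap.finrank_range_add_finrank_ker ℓ
      have h3 : Module.finrank ℝ (LinearMap.range ℓ) ≤ (S \ S').card := by
        refine (Submodule.finrank_le _).trans (le_of_eq ?_)
        rw [Module.finrank_fintype_fun_eq_card, Fintype.card_coe]
      have h4 := Submodule.finrank_le (H ⊔ LinearMap.ker ℓ)
      have h5 : (S \ S').card + S'.card = S.card :=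
        Finset.card_sdiff_add_card_eq_card (Finset.filter_subset _ _)
      change Module.finrank ℝ H + S'.card ≤
        Module.finrank ℝ (H ⊓ LinearMap.ker ℓ : Submodule ℝ (EuclideanSpace ℝ (Fin n))) + S.card
      omega
    obtain ⟨i0, hi0, hi0min⟩ := S'.exists_min_image (fun i => 1 - |x i|) hS'ne
    have hδ : 0 < 1 - |x i0| := by
      have := (Finset.mem_filter.1 hi0).2
      linarith
    have hso := gs_second_order T H L inf_le_left x lam (1 - |x i0|) hδ (by
      intro h hh hn
      refine hxmin' (x + h) fun i => ⟨?_, fun hi => ?_⟩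
      · by_cases hi : i ∈ S'
        · have h1 : ‖h i‖ ≤ ‖h‖ := PiLp.norm_apply_le h i
          have h2 := hi0min i hi
          rw [Real.norm_eq_abs] at h1
          have h3 := abs_add_le (x i) (h i)
          have h4 : (x + h) i = x i + h i := rfl
          rw [h4]
          linarith
        · have h4 : (x + h) i = x i + h i := rfl
          rw [h4, hLsupp h hh i hi, add_zero]
          exact (hxK i).1
      · have h4 : (x + h) i = x i + h i := rfl
        rw [h4, hH h hh.1 i hi, add_zero]
        exact (hxK i).2 hi)
    have hL' : (4 : ℝ) / 10 * S.card ≤ Module.finrank ℝ L := by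
      have : 4 * S.card ≤ 10 * Module.finrank ℝ L := by omega
      have : (4 : ℝ) * S.card ≤ 10 * Module.finrank ℝ L := by exact_mod_cast this
      linarith
    have h6 : 2 * lam * (4 / 10 * S.card) ≤ R := by
      refine le_trans ?_ (hso.trans hER)
      have : 0 ≤ lam := by positivity
      gcongr
    have h7 : 2 * lam * (4 / 10 * S.card) = 16 / 10 * R := by
      rw [hlam]; field_simp; norm_num
    linarith
  · have h1 := hxmin' x0 hKx0
    have h2 : ‖T x‖ ≤ φ x := pc_jensen T A x
    have h3 : φ x0 ≤ ‖T x0‖ + R := by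
      calc φ x0 ≤ ∫ g, (‖T x0‖ + ‖A g‖) ∂(stdGaussian (EuclideanSpace ℝ (Fin n))) :=
            integral_mono (gs_integrable _ _) ((integrable_const _).add
              (by simpa using gs_integrable A 0)) fun g => norm_add_le _ _
        _ = ‖T x0‖ + ∫ g, ‖A g‖ ∂(stdGaussian (EuclideanSpace ℝ (Fin n))) := by
            rw [integral_add (integrable_const _) (by simpa using gs_integrable A 0)]
            simp
        _ ≤ _ := by gcongr; exact hER
    have h4 : ‖x‖ ^ 2 - ‖x0‖ ^ 2 ≤ S.card := by
      rw [EuclideanSpace.real_norm_sq_eq, EuclideanSpace.real_norm_sq_eq, ← Finset.sum_sub_distrib]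
      calc ∑ i, (x i ^ 2 - x0 i ^ 2) ≤ ∑ i, (if i ∈ S then (1 : ℝ) else 0) := by
            refine Finset.sum_le_sum fun i _ => ?_
            by_cases hi : i ∈ S
            · rw [if_pos hi]
              have : x i ^ 2 ≤ 1 := (sq_le_one_iff_abs_le_one _).2 (hxK i).1
              nlinarith [sq_nonneg (x0 i)]
            · rw [if_neg hi, (hxK i).2 hi]; simp
        _ = S.card := by simp
    have h5 : lam * (‖x‖ ^ 2 - ‖x0‖ ^ 2) ≤ 2 * R := by
      calc _ ≤ lam * S.card := by
            have : 0 ≤ lam := by positivity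
            gcongr
        _ = 2 * R := by rw [hlam]; field_simp
    linarith

lemma pc_full [CompleteSpace F] (T : EuclideanSpace ℝ (Fin n) →L[ℝ] F) (R : ℕ → ℝ) (K : ℝ)
    (hR0 : ∀ m, 0 ≤ R m) (hRpos : ∀ m, 0 < m → 0 < R m) (hK : 0 ≤ K)
    (hRK : ∀ m m', 2 * m' ≤ m → 3 * R m + K * R m' ≤ K * R m)
    (hH : ∀ S : Finset (Fin n), S.Nonempty → ∃ H : Submodule ℝ (EuclideanSpace ℝ (Fin n)),
      (∀ y ∈ H, ∀ i, i ∉ S → y i = 0) ∧ 9 * S.card ≤ 10 * Module.finrank ℝ H ∧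
      ∫ g, ‖T (H.starProjection g)‖ ∂(stdGaussian (EuclideanSpace ℝ (Fin n))) ≤ R S.card) :
    ∀ (N : ℕ) (S : Finset (Fin n)), S.card ≤ N → ∀ x0 : EuclideanSpace ℝ (Fin n),
      (∀ i, |x0 i| ≤ 1) → (∀ i, i ∉ S → |x0 i| = 1) →
      ∃ x : EuclideanSpace ℝ (Fin n), (∀ i, |x i| = 1) ∧ ‖T x‖ ≤ ‖T x0‖ + K * R S.card := by
  intro N
  induction N with
  | zero =>
    intro S hS x0 _ h2
    have : S = ∅ := by rw [← Finset.card_eq_zero]; omega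
    subst this
    refine ⟨x0, fun i => h2 i (by simp), ?_⟩
    have := mul_nonneg hK (hR0 (∅ : Finset (Fin n)).card)
    linarith
  | succ N ih =>
    intro S hS x0 h1 h2
    rcases S.eq_empty_or_nonempty with rfl | hne
    · refine ⟨x0, fun i => h2 i (by simp), ?_⟩
      have := mul_nonneg hK (hR0 (∅ : Finset (Fin n)).card)
      linarith
    · obtain ⟨H, hHS, hHd, hHR⟩ := hH S hne
      obtain ⟨x, hx1, hx2, hx3, hx4⟩ := pc_step T x0 h1 S hne H hHS hHd _
        (hRpos _ hne.card_pos) hHR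
      have hpos := hne.card_pos
      obtain ⟨z, hz1, hz2⟩ := ih (S.filter (fun i => |x i| < 1)) (by omega) x hx1 (by
        intro i hi
        by_cases hiS : i ∈ S
        · have : ¬ |x i| < 1 := fun h => hi (Finset.mem_filter.2 ⟨hiS, h⟩)
          exact le_antisymm (hx1 i) (not_lt.1 this)
        · rw [hx2 i hiS]; exact h2 i hiS)
      refine ⟨z, hz1, ?_⟩
      have := hRK _ _ hx3
      linarith

end PartialColoring
section TraceIneq
set_option linter.unusedSectionVars false
open Matrix
variable {ι κ : Type*} [Fintype ι] [DecidableEq ι] [Fintype κ]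

/-- Structural hypotheses on a family of symmetric coefficient matrices. -/
structure TB (B : κ → Matrix ι ι ℝ) (s w : ℝ) : Prop where
  symm : ∀ k, (B k)ᵀ = B k
  h1 : ∀ M : Matrix ι ι ℝ, ∑ k, ((B k * M)ᵀ * (B k * M)).trace ≤ s * (Mᵀ * M).trace
  h2 : ∀ M : Matrix ι ι ℝ, ∑ k, (Mᵀ * B k).trace ^ 2 ≤ w * (Mᵀ * M).trace

lemma ti_diag (X : Matrix ι ι ℝ) (hX : Xᵀ = X) :
    ∃ φ : Matrix ι ι ℝ ≃ₐ[ℝ] Matrix ι ι ℝ, (∀ M, (φ M).trace = M.trace) ∧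
      (∀ M, (φ M)ᵀ = φ Mᵀ) ∧ ∃ x : ι → ℝ, φ X = diagonal x := by
  have hH : X.IsHermitian := by
    rw [Matrix.IsHermitian, conjTranspose_eq_transpose_of_trivial, hX]
  let ψ := Unitary.conjStarAlgAut ℝ (Matrix ι ι ℝ) hH.eigenvectorUnitary
  have htr : ∀ M, (ψ M).trace = M.trace := by
    intro M
    simp only [ψ, Unitary.conjStarAlgAut_apply]
    rw [Matrix.trace_mul_comm, ← mul_assoc]
    simp
  have hst : ∀ M, (ψ M)ᵀ = ψ Mᵀ := by
    intro M
    have := map_star ψ M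
    simp only [star_eq_conjTranspose, conjTranspose_eq_transpose_of_trivial] at this
    exact this.symm
  refine ⟨ψ.symm.toAlgEquiv, fun M => ?_, fun M => ?_, hH.eigenvalues, ?_⟩
  · have := htr (ψ.symm M)
    rw [StarAlgEquiv.apply_symm_apply] at this
    exact this.symm
  · have := hst (ψ.symm M)
    rw [StarAlgEquiv.apply_symm_apply] at this
    change (ψ.symm M)ᵀ = ψ.symm Mᵀ
    rw [this, StarAlgEquiv.symm_apply_apply]
  · have := hH.spectral_theorem
    change ψ.symm X = _
    conv_lhs => rw [this]
    exact StarAlgEquiv.symm_apply_apply _ _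

lemma TB.conj {B : κ → Matrix ι ι ℝ} {s w : ℝ} (h : TB B s w)
    (φ : Matrix ι ι ℝ ≃ₐ[ℝ] Matrix ι ι ℝ) (ht : ∀ M, (φ M).trace = M.trace)
    (hs : ∀ M, (φ M)ᵀ = φ Mᵀ) : TB (fun k => φ (B k)) s w where
  symm k := by rw [hs, h.symm]
  h1 M := by
    obtain ⟨N, rfl⟩ := φ.surjective M
    simp only [← map_mul, hs, ht]
    exact h.h1 N
  h2 M := by
    obtain ⟨N, rfl⟩ := φ.surjective M
    simp only [hs, ← map_mul, ht]
    exact h.h2 N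

lemma TB.row_sum {B : κ → Matrix ι ι ℝ} {s w : ℝ} (h : TB B s w) (a : ι) :
    ∑ b, ∑ k, B k a b ^ 2 ≤ s := by
  have := h.h1 (Matrix.single a a 1)
  have e : ∀ k, ((B k * Matrix.single a a 1)ᵀ * (B k * Matrix.single a a (1:ℝ))).trace
      = ∑ b, B k a b ^ 2 := by
    intro k
    simp only [Matrix.trace, Matrix.diag, Matrix.mul_apply, Matrix.transpose_apply]
    rw [Finset.sum_eq_single a]
    · refine Finset.sum_congr rfl fun b _ => ?_
      have hh : B k b a = B k a b := congrFun (congrFun (h.symm k) a) b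
      simp [Matrix.single_apply, hh, sq]
    · intro c _ hc
      simp [hc.symm]
    · simp
  simp only [e] at this
  rw [Finset.sum_comm]
  simpa using this

lemma ti_pw (a b : ℝ) (p q : ℕ) (h : Even (p + q)) :
    |a ^ p * b ^ q| ≤ a ^ (p + q) + b ^ (p + q) := by
  rw [abs_mul, abs_pow, abs_pow, ← h.pow_abs a, ← h.pow_abs b]
  have ha := abs_nonneg a
  have hb := abs_nonneg b
  rcases le_total |a| |b| with hab | hab
  · calc |a| ^ p * |b| ^ q ≤ |b| ^ p * |b| ^ q := by gcongr
      _ = |b| ^ (p + q) := by rw [pow_add]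
      _ ≤ _ := by have := pow_nonneg ha (p + q); linarith
  · calc |a| ^ p * |b| ^ q ≤ |a| ^ p * |a| ^ q := by gcongr
      _ = |a| ^ (p + q) := by rw [pow_add]
      _ ≤ _ := by have := pow_nonneg hb (p + q); linarith

lemma ti_pw3 (a b c : ℝ) (p q r : ℕ) (h : Even (p + q + r)) :
    |a ^ p * b ^ q * c ^ r| ≤ a ^ (p + q + r) + b ^ (p + q + r) + c ^ (p + q + r) := by
  rw [abs_mul, abs_mul, abs_pow, abs_pow, abs_pow, ← h.pow_abs a, ← h.pow_abs b, ← h.pow_abs c]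
  have ha := abs_nonneg a
  have hb := abs_nonneg b
  have hc := abs_nonneg c
  have ha' := pow_nonneg ha (p + q + r)
  have hb' := pow_nonneg hb (p + q + r)
  have hc' := pow_nonneg hc (p + q + r)
  obtain ⟨m, hm, h1, h2, h3, h4⟩ : ∃ m, 0 ≤ m ∧ |a| ≤ m ∧ |b| ≤ m ∧ |c| ≤ m ∧
      m ^ (p + q + r) ≤ |a| ^ (p + q + r) + |b| ^ (p + q + r) + |c| ^ (p + q + r) := by
    rcases le_total |a| |b| with hab | hab
    · rcases le_total |b| |c| with hbc | hbc
      · exact ⟨|c|, hc, hab.trans hbc, hbc, le_rfl, by linarith⟩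
      · exact ⟨|b|, hb, hab, le_rfl, hbc, by linarith⟩
    · rcases le_total |a| |c| with hbc | hbc
      · exact ⟨|c|, hc, hbc, hab.trans hbc, le_rfl, by linarith⟩
      · exact ⟨|a|, ha, le_rfl, hab, hbc, by linarith⟩
  refine le_trans ?_ h4
  rw [pow_add, pow_add]
  gcongr

lemma ti_trace2 {B : Matrix ι ι ℝ} (hB : Bᵀ = B) (x : ι → ℝ) (p q : ℕ) :
    (B * diagonal x ^ p * B * diagonal x ^ q).trace =
      ∑ a, ∑ b, B a b ^ 2 * (x b ^ p * x a ^ q) := by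
  simp only [Matrix.trace, Matrix.diag, Matrix.diagonal_pow, Matrix.mul_diagonal]
  refine Finset.sum_congr rfl fun a _ => ?_
  rw [Matrix.mul_apply, Finset.sum_mul]
  refine Finset.sum_congr rfl fun b _ => ?_
  have hh : B b a = B a b := congrFun (congrFun hB a) b
  rw [Matrix.mul_diagonal, hh]
  simp only [Pi.pow_apply]
  ring

lemma ti_trace_pow (x : ι → ℝ) (p : ℕ) : (diagonal x ^ p).trace = ∑ a, x a ^ p := by
  simp [Matrix.trace, Matrix.diagonal_pow]

lemma TB.entry_symm {B : κ → Matrix ι ι ℝ} {s w : ℝ} (h : TB B s w) (k : κ) (a b : ι) :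
    B k a b = B k b a := congrFun (congrFun (h.symm k) b) a

lemma TB.sum_trace2 {B : κ → Matrix ι ι ℝ} {s w : ℝ} (h : TB B s w) (x : ι → ℝ) (p q : ℕ) :
    ∑ k, (B k * diagonal x ^ p * B k * diagonal x ^ q).trace =
      ∑ a, ∑ b, (∑ k, B k a b ^ 2) * (x b ^ p * x a ^ q) := by
  simp only [fun k => ti_trace2 (h.symm k) x p q]
  rw [Finset.sum_comm]
  refine Finset.sum_congr rfl fun a _ => ?_
  rw [Finset.sum_comm]
  simp only [Finset.sum_mul]

lemma TB.weight {B : κ → Matrix ι ι ℝ} {s w : ℝ} (h : TB B s w) (y : ι → ℝ) (hy : ∀ a, 0 ≤ y a) :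
    ∑ a, ∑ b, (∑ k, B k a b ^ 2) * y a ≤ s * ∑ a, y a := by
  rw [Finset.mul_sum]
  refine Finset.sum_le_sum fun a _ => ?_
  rw [← Finset.sum_mul]
  exact mul_le_mul_of_nonneg_right (h.row_sum a) (hy a)

lemma TB.swap {B : κ → Matrix ι ι ℝ} {s w : ℝ} (h : TB B s w) (f : ι → ι → ℝ) :
    ∑ a, ∑ b, (∑ k, B k a b ^ 2) * f a b = ∑ a, ∑ b, (∑ k, B k a b ^ 2) * f b a := by
  rw [Finset.sum_comm]
  refine Finset.sum_congr rfl fun a _ => Finset.sum_congr rfl fun b _ => ?_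
  simp only [fun k => h.entry_symm k b a]

lemma ti_I1_diag {B : κ → Matrix ι ι ℝ} {s w : ℝ} (h : TB B s w) (x : ι → ℝ)
    (p q : ℕ) (hpq : Even (p + q)) :
    ∑ k, (B k * diagonal x ^ p * B k * diagonal x ^ q).trace ≤
      2 * s * (diagonal x ^ (p + q)).trace := by
  rw [h.sum_trace2, ti_trace_pow]
  have h1 := h.weight (fun a => x a ^ (p + q)) (fun a => hpq.pow_nonneg _)
  have h2 := h.swap (fun a _ => x a ^ (p + q))
  have h3 : ∑ a, ∑ b, (∑ k, B k a b ^ 2) * (x b ^ p * x a ^ q) ≤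
      ∑ a, ∑ b, (∑ k, B k a b ^ 2) * x b ^ (p + q) +
        ∑ a, ∑ b, (∑ k, B k a b ^ 2) * x a ^ (p + q) := by
    rw [← Finset.sum_add_distrib]
    refine Finset.sum_le_sum fun a _ => ?_
    rw [← Finset.sum_add_distrib]
    refine Finset.sum_le_sum fun b _ => ?_
    rw [← mul_add]
    exact mul_le_mul_of_nonneg_left (le_trans (le_abs_self _) (ti_pw (x b) (x a) p q hpq))
      (Finset.sum_nonneg fun k _ => sq_nonneg _)
  linarith

lemma ti_I2_diag {B : κ → Matrix ι ι ℝ} {s w : ℝ} (h : TB B s w) (x : ι → ℝ)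
    (p q : ℕ) (hpq : Even (p + q)) :
    ∑ k, (B k * diagonal x ^ (p + 2) * B k * diagonal x ^ (q + 2)).trace ≤
      2 * ∑ k, (B k * diagonal x ^ 2 * B k * diagonal x ^ (p + q + 2)).trace := by
  rw [h.sum_trace2, h.sum_trace2]
  have h2 := h.swap (fun a b => x b ^ 2 * x a ^ (p + q + 2))
  have h3 : ∑ a, ∑ b, (∑ k, B k a b ^ 2) * (x b ^ (p + 2) * x a ^ (q + 2)) ≤
      ∑ a, ∑ b, (∑ k, B k a b ^ 2) * (x a ^ 2 * x b ^ (p + q + 2)) +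
        ∑ a, ∑ b, (∑ k, B k a b ^ 2) * (x b ^ 2 * x a ^ (p + q + 2)) := by
    rw [← Finset.sum_add_distrib]
    refine Finset.sum_le_sum fun a _ => ?_
    rw [← Finset.sum_add_distrib]
    refine Finset.sum_le_sum fun b _ => ?_
    rw [← mul_add]
    refine mul_le_mul_of_nonneg_left ?_ (Finset.sum_nonneg fun k _ => sq_nonneg _)
    have h5 := le_trans (le_abs_self _) (ti_pw (x b) (x a) p q hpq)
    have h6 := mul_le_mul_of_nonneg_left h5 (mul_nonneg (sq_nonneg (x a)) (sq_nonneg (x b)))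
    calc _ = x a ^ 2 * x b ^ 2 * (x b ^ p * x a ^ q) := by ring
      _ ≤ _ := h6
      _ = _ := by ring
  linarith

lemma ti_I3_diag {B : κ → Matrix ι ι ℝ} {s w : ℝ} (h : TB B s w) (hs : 0 ≤ s) (x : ι → ℝ)
    (m : ℕ) (hm : Even m) :
    ∑ k, ∑ j, (B k * B j * B j * B k * diagonal x ^ m).trace ≤
      s ^ 2 * (diagonal x ^ m).trace := by
  obtain ⟨r, rfl⟩ := hm
  have e : ∀ k j, (B k * B j * B j * B k * diagonal x ^ (r + r)).trace =
      ((B j * (B k * diagonal x ^ r))ᵀ * (B j * (B k * diagonal x ^ r))).trace := by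
    intro k j
    rw [Matrix.transpose_mul, Matrix.transpose_mul, h.symm, h.symm, Matrix.diagonal_pow,
      Matrix.diagonal_pow, Matrix.diagonal_transpose, ← Matrix.diagonal_pow, ← Matrix.diagonal_pow,
      pow_add, ← mul_assoc, Matrix.trace_mul_comm]
    simp only [mul_assoc]
  simp only [e]
  calc _ ≤ ∑ k, s * ((B k * diagonal x ^ r)ᵀ * (B k * diagonal x ^ r)).trace :=
        Finset.sum_le_sum fun k _ => h.h1 _
    _ ≤ s * (s * ((diagonal x ^ r)ᵀ * diagonal x ^ r).trace) := by
        rw [← Finset.mul_sum]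
        exact mul_le_mul_of_nonneg_left (h.h1 _) hs
    _ = _ := by
        rw [Matrix.diagonal_pow, Matrix.diagonal_transpose, ← Matrix.diagonal_pow, ← pow_add]
        ring

lemma TB.cov_sq {B : κ → Matrix ι ι ℝ} {s w : ℝ} (h : TB B s w) (hw : 0 ≤ w) (a b : ι) :
    ∑ c, ∑ e, (∑ k, B k a b * B k c e) ^ 2 ≤ w * ∑ k, B k a b ^ 2 := by
  set M : Matrix ι ι ℝ := fun c e => ∑ k, B k a b * B k c e with hM
  have htr : ∀ N : Matrix ι ι ℝ, (Mᵀ * N).trace = ∑ c, ∑ e, M c e * N c e := by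
    intro N
    simp only [Matrix.trace, Matrix.diag, Matrix.mul_apply, Matrix.transpose_apply]
    rw [Finset.sum_comm]
  have h2 := h.h2 M
  have hMM : (Mᵀ * M).trace = ∑ k, B k a b * (Mᵀ * B k).trace := by
    simp only [htr, Finset.mul_sum]
    conv_rhs => rw [Finset.sum_comm]
    refine Finset.sum_congr rfl fun c _ => ?_
    conv_rhs => rw [Finset.sum_comm]
    refine Finset.sum_congr rfl fun e _ => ?_
    calc M c e * M c e = M c e * ∑ k, B k a b * B k c e := rfl
      _ = _ := by
        rw [Finset.mul_sum]
        exact Finset.sum_congr rfl fun k _ => by ring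
  have hcs := Finset.sum_mul_sq_le_sq_mul_sq Finset.univ (fun k => B k a b)
    (fun k => (Mᵀ * B k).trace)
  rw [← hMM] at hcs
  have hT : (Mᵀ * M).trace = ∑ c, ∑ e, (∑ k, B k a b * B k c e) ^ 2 := by
    rw [htr]; simp only [hM, sq]
  rw [← hT]
  have hT0 : 0 ≤ (Mᵀ * M).trace := by
    rw [hT]; exact Finset.sum_nonneg fun _ _ => Finset.sum_nonneg fun _ _ => sq_nonneg _
  have hS0 : 0 ≤ ∑ k, B k a b ^ 2 := Finset.sum_nonneg fun _ _ => sq_nonneg _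
  have h5 := hcs.trans (mul_le_mul_of_nonneg_left h2 hS0)
  generalize (Mᵀ * M).trace = t at *
  generalize ∑ k, B k a b ^ 2 = S at *
  by_contra hcon
  push Not at hcon
  have : 0 < t := lt_of_le_of_lt (mul_nonneg hw hS0) hcon
  nlinarith

/-- The covariance tensor of the family. -/
def ti_cov (B : κ → Matrix ι ι ℝ) (a b c e : ι) : ℝ := ∑ k, B k a b * B k c e

lemma TB.cov_weight {B : κ → Matrix ι ι ℝ} {s w : ℝ} (h : TB B s w) (hw : 0 ≤ w)
    (y : ι → ℝ) (hy : ∀ a, 0 ≤ y a) :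
    ∑ q : ι × ι × ι × ι, y q.1 * ti_cov B q.1 q.2.1 q.2.2.1 q.2.2.2 ^ 2 ≤ w * s * ∑ a, y a := by
  simp only [Fintype.sum_prod_type]
  calc _ ≤ ∑ a, ∑ b, y a * (w * ∑ k, B k a b ^ 2) := by
        refine Finset.sum_le_sum fun a _ => Finset.sum_le_sum fun b _ => ?_
        simp only [← Finset.mul_sum]
        exact mul_le_mul_of_nonneg_left (h.cov_sq hw a b) (hy a)
    _ = w * ∑ a, ∑ b, (∑ k, B k a b ^ 2) * y a := by
        simp only [Finset.mul_sum]
        refine Finset.sum_congr rfl fun a _ => Finset.sum_congr rfl fun b _ => ?_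
        rw [← Finset.mul_sum, ← Finset.mul_sum]; ring
    _ ≤ w * (s * ∑ a, y a) := mul_le_mul_of_nonneg_left (h.weight y hy) hw
    _ = _ := by ring

lemma ti_cov_swap (B : κ → Matrix ι ι ℝ) (a b c e : ι) : ti_cov B a b c e = ti_cov B c e a b :=
  Finset.sum_congr rfl fun _ _ => mul_comm _ _

lemma TB.cov_left {B : κ → Matrix ι ι ℝ} {s w : ℝ} (h : TB B s w) (a b c e : ι) :
    ti_cov B a b c e = ti_cov B b a c e :=
  Finset.sum_congr rfl fun k _ => by rw [h.entry_symm k a b]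

lemma TB.cov_weights {B : κ → Matrix ι ι ℝ} {s w : ℝ} (h : TB B s w) (hw : 0 ≤ w)
    (y : ι → ℝ) (hy : ∀ a, 0 ≤ y a) :
    ∑ q : ι × ι × ι × ι, (y q.1 + y q.2.2.1 + y q.2.2.2) *
      (ti_cov B q.1 q.2.1 q.2.2.1 q.2.2.2 ^ 2 + ti_cov B q.2.1 q.2.2.1 q.2.2.2 q.1 ^ 2)
      ≤ 6 * (w * s * ∑ a, y a) := by
  have h0 := h.cov_weight hw y hy
  have h2 : ∑ q : ι × ι × ι × ι, y q.2.2.1 * ti_cov B q.1 q.2.1 q.2.2.1 q.2.2.2 ^ 2 =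
      ∑ q : ι × ι × ι × ι, y q.1 * ti_cov B q.1 q.2.1 q.2.2.1 q.2.2.2 ^ 2 := by
    refine Fintype.sum_equiv ⟨fun q => (q.2.2.1, q.2.2.2, q.1, q.2.1),
      fun q => (q.2.2.1, q.2.2.2, q.1, q.2.1), fun _ => rfl, fun _ => rfl⟩ _ _ fun q => ?_
    simp only [Equiv.coe_fn_mk]
    rw [ti_cov_swap B q.1]
  have h3 : ∑ q : ι × ι × ι × ι, y q.2.2.2 * ti_cov B q.1 q.2.1 q.2.2.1 q.2.2.2 ^ 2 =
      ∑ q : ι × ι × ι × ι, y q.1 * ti_cov B q.1 q.2.1 q.2.2.1 q.2.2.2 ^ 2 := by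
    refine Fintype.sum_equiv ⟨fun q => (q.2.2.2, q.2.2.1, q.1, q.2.1),
      fun q => (q.2.2.1, q.2.2.2, q.2.1, q.1), fun _ => rfl, fun _ => rfl⟩ _ _ fun q => ?_
    simp only [Equiv.coe_fn_mk]
    rw [ti_cov_swap B q.1, h.cov_left]
  have h4 : ∑ q : ι × ι × ι × ι, y q.1 * ti_cov B q.2.1 q.2.2.1 q.2.2.2 q.1 ^ 2 =
      ∑ q : ι × ι × ι × ι, y q.1 * ti_cov B q.1 q.2.1 q.2.2.1 q.2.2.2 ^ 2 := by
    refine Fintype.sum_equiv ⟨fun q => (q.1, q.2.2.2, q.2.1, q.2.2.1),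
      fun q => (q.1, q.2.2.1, q.2.2.2, q.2.1), fun _ => rfl, fun _ => rfl⟩ _ _ fun q => ?_
    simp only [Equiv.coe_fn_mk]
    rw [ti_cov_swap B q.2.1, h.cov_left]
  have h5 : ∑ q : ι × ι × ι × ι, y q.2.2.1 * ti_cov B q.2.1 q.2.2.1 q.2.2.2 q.1 ^ 2 =
      ∑ q : ι × ι × ι × ι, y q.1 * ti_cov B q.1 q.2.1 q.2.2.1 q.2.2.2 ^ 2 := by
    refine Fintype.sum_equiv ⟨fun q => (q.2.2.1, q.2.1, q.2.2.2, q.1),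
      fun q => (q.2.2.2, q.2.1, q.1, q.2.2.1), fun _ => rfl, fun _ => rfl⟩ _ _ fun q => ?_
    simp only [Equiv.coe_fn_mk]
    rw [h.cov_left]
  have h6 : ∑ q : ι × ι × ι × ι, y q.2.2.2 * ti_cov B q.2.1 q.2.2.1 q.2.2.2 q.1 ^ 2 =
      ∑ q : ι × ι × ι × ι, y q.1 * ti_cov B q.1 q.2.1 q.2.2.1 q.2.2.2 ^ 2 := by
    refine Fintype.sum_equiv ⟨fun q => (q.2.2.2, q.1, q.2.1, q.2.2.1),
      fun q => (q.2.1, q.2.2.1, q.2.2.2, q.1), fun _ => rfl, fun _ => rfl⟩ _ _ fun q => ?_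
    simp only [Equiv.coe_fn_mk]
    rw [ti_cov_swap B q.2.1]
  simp only [add_mul, mul_add, Finset.sum_add_distrib]
  linarith

lemma ti_I4_expand (B : κ → Matrix ι ι ℝ) (x : ι → ℝ) (p q : ℕ) :
    ∑ k, ∑ j, (B k * B j * diagonal x * B k * diagonal x ^ p * B j * diagonal x ^ q).trace =
      ∑ t : ι × ι × ι × ι, (x t.2.2.1 ^ 1 * x t.2.2.2 ^ p * x t.1 ^ q) *
        (ti_cov B t.1 t.2.1 t.2.2.1 t.2.2.2 * ti_cov B t.2.1 t.2.2.1 t.2.2.2 t.1) := by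
  have e : ∀ k j, (B k * B j * diagonal x * B k * diagonal x ^ p * B j * diagonal x ^ q).trace =
      ∑ t : ι × ι × ι × ι, (x t.2.2.1 ^ 1 * x t.2.2.2 ^ p * x t.1 ^ q) *
        ((B k t.1 t.2.1 * B k t.2.2.1 t.2.2.2) * (B j t.2.1 t.2.2.1 * B j t.2.2.2 t.1)) := by
    intro k j
    have e1 : (B k * B j * diagonal x * B k * diagonal x ^ p * B j * diagonal x ^ q).trace =
        ∑ a, ∑ d, ∑ c, ∑ b, (x c ^ 1 * x d ^ p * x a ^ q) *
        ((B k a b * B k c d) * (B j b c * B j d a)) := by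
      simp only [Matrix.trace, Matrix.diag, Matrix.diagonal_pow, Matrix.mul_diagonal]
      refine Finset.sum_congr rfl fun a _ => ?_
      rw [Matrix.mul_apply, Finset.sum_mul]
      refine Finset.sum_congr rfl fun d _ => ?_
      rw [Matrix.mul_diagonal, Matrix.mul_apply, Finset.sum_mul, Finset.sum_mul, Finset.sum_mul]
      refine Finset.sum_congr rfl fun c _ => ?_
      rw [Matrix.mul_diagonal, Matrix.mul_apply]
      simp only [Finset.sum_mul]
      refine Finset.sum_congr rfl fun b _ => ?_
      simp only [Pi.pow_apply]
      ring
    rw [e1]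
    have e2 : ∑ a, ∑ d, ∑ c, ∑ b, (x c ^ 1 * x d ^ p * x a ^ q) *
        ((B k a b * B k c d) * (B j b c * B j d a)) =
        ∑ t : ι × ι × ι × ι, (x t.2.2.1 ^ 1 * x t.2.1 ^ p * x t.1 ^ q) *
        ((B k t.1 t.2.2.2 * B k t.2.2.1 t.2.1) * (B j t.2.2.2 t.2.2.1 * B j t.2.1 t.1)) := by
      simp only [Fintype.sum_prod_type]
    rw [e2]
    exact Fintype.sum_equiv ⟨fun q => (q.1, q.2.2.2, q.2.2.1, q.2.1),
      fun q => (q.1, q.2.2.2, q.2.2.1, q.2.1), fun _ => rfl, fun _ => rfl⟩ _ _ fun q => rfl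
  simp only [e]
  calc _ = ∑ k, ∑ t : ι × ι × ι × ι, ∑ j, (x t.2.2.1 ^ 1 * x t.2.2.2 ^ p * x t.1 ^ q) *
        ((B k t.1 t.2.1 * B k t.2.2.1 t.2.2.2) * (B j t.2.1 t.2.2.1 * B j t.2.2.2 t.1)) :=
        Finset.sum_congr rfl fun k _ => Finset.sum_comm
    _ = _ := by
        rw [Finset.sum_comm]
        refine Finset.sum_congr rfl fun t _ => ?_
        rw [ti_cov, ti_cov, Finset.sum_mul_sum, Finset.mul_sum]
        refine Finset.sum_congr rfl fun k _ => ?_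
        rw [Finset.mul_sum]

lemma ti_I4_diag {B : κ → Matrix ι ι ℝ} {s w : ℝ} (h : TB B s w) (hw : 0 ≤ w) (x : ι → ℝ)
    (p q : ℕ) (hpq : Even (1 + p + q)) :
    ∑ k, ∑ j, (B k * B j * diagonal x * B k * diagonal x ^ p * B j * diagonal x ^ q).trace ≤
      3 * (w * s) * (diagonal x ^ (1 + p + q)).trace := by
  rw [ti_I4_expand, ti_trace_pow]
  have h0 := h.cov_weights hw (fun a => x a ^ (1 + p + q)) (fun a => hpq.pow_nonneg _)
  have h1 : ∑ t : ι × ι × ι × ι, (x t.2.2.1 ^ 1 * x t.2.2.2 ^ p * x t.1 ^ q) *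
        (ti_cov B t.1 t.2.1 t.2.2.1 t.2.2.2 * ti_cov B t.2.1 t.2.2.1 t.2.2.2 t.1) ≤
      ∑ t : ι × ι × ι × ι, (1 / 2) * ((x t.1 ^ (1 + p + q) + x t.2.2.1 ^ (1 + p + q)
        + x t.2.2.2 ^ (1 + p + q)) *
      (ti_cov B t.1 t.2.1 t.2.2.1 t.2.2.2 ^ 2 + ti_cov B t.2.1 t.2.2.1 t.2.2.2 t.1 ^ 2)) := by
    refine Finset.sum_le_sum fun t _ => ?_
    have h2 := ti_pw3 (x t.2.2.1) (x t.2.2.2) (x t.1) 1 p q hpq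
    generalize ti_cov B t.1 t.2.1 t.2.2.1 t.2.2.2 = u
    generalize ti_cov B t.2.1 t.2.2.1 t.2.2.2 t.1 = v
    have h3 : |u * v| ≤ (u ^ 2 + v ^ 2) / 2 := by
      rw [abs_le]; constructor <;> nlinarith [sq_nonneg (u + v), sq_nonneg (u - v)]
    calc _ ≤ |(x t.2.2.1 ^ 1 * x t.2.2.2 ^ p * x t.1 ^ q) * (u * v)| := le_abs_self _
      _ ≤ (x t.2.2.1 ^ (1 + p + q) + x t.2.2.2 ^ (1 + p + q) + x t.1 ^ (1 + p + q)) *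
          ((u ^ 2 + v ^ 2) / 2) := by
          rw [abs_mul]
          exact mul_le_mul h2 h3 (abs_nonneg _) ((abs_nonneg _).trans h2)
      _ = _ := by ring
  rw [← Finset.mul_sum] at h1
  linarith

lemma ti_I1 {B : κ → Matrix ι ι ℝ} {s w : ℝ} (h : TB B s w) {X : Matrix ι ι ℝ} (hX : Xᵀ = X)
    (p q : ℕ) (hpq : Even (p + q)) :
    ∑ k, (B k * X ^ p * B k * X ^ q).trace ≤ 2 * s * (X ^ (p + q)).trace := by
  obtain ⟨φ, ht, hs, x, hx⟩ := ti_diag X hX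
  have := ti_I1_diag (h.conj φ ht hs) x p q hpq
  simpa only [← hx, ← map_mul, ← map_pow, ht] using this

lemma ti_I2 {B : κ → Matrix ι ι ℝ} {s w : ℝ} (h : TB B s w) {X : Matrix ι ι ℝ} (hX : Xᵀ = X)
    (p q : ℕ) (hpq : Even (p + q)) :
    ∑ k, (B k * X ^ (p + 2) * B k * X ^ (q + 2)).trace ≤
      2 * ∑ k, (B k * X ^ 2 * B k * X ^ (p + q + 2)).trace := by
  obtain ⟨φ, ht, hs, x, hx⟩ := ti_diag X hX
  have := ti_I2_diag (h.conj φ ht hs) x p q hpq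
  simpa only [← hx, ← map_mul, ← map_pow, ht] using this

lemma ti_I3 {B : κ → Matrix ι ι ℝ} {s w : ℝ} (h : TB B s w) (h0 : 0 ≤ s)
    {X : Matrix ι ι ℝ} (hX : Xᵀ = X) (m : ℕ) (hm : Even m) :
    ∑ k, ∑ j, (B k * B j * B j * B k * X ^ m).trace ≤ s ^ 2 * (X ^ m).trace := by
  obtain ⟨φ, ht, hs, x, hx⟩ := ti_diag X hX
  have := ti_I3_diag (h.conj φ ht hs) h0 x m hm
  simpa only [← hx, ← map_mul, ← map_pow, ht] using this

lemma ti_I4 {B : κ → Matrix ι ι ℝ} {s w : ℝ} (h : TB B s w) (hw : 0 ≤ w)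
    {X : Matrix ι ι ℝ} (hX : Xᵀ = X) (p q : ℕ) (hpq : Even (1 + p + q)) :
    ∑ k, ∑ j, (B k * B j * X * B k * X ^ p * B j * X ^ q).trace ≤
      3 * (w * s) * (X ^ (1 + p + q)).trace := by
  obtain ⟨φ, ht, hs, x, hx⟩ := ti_diag X hX
  have := ti_I4_diag (h.conj φ ht hs) hw x p q hpq
  simpa only [← hx, ← map_mul, ← map_pow, ht] using this

end TraceIneq
section ChoiceH
open Matrix
variable {n : ℕ} {ι : Type*} [Fintype ι] [DecidableEq ι]
set_option linter.unusedSectionVars false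

lemma ch_trace (M N : Matrix ι ι ℝ) : (Mᵀ * N).trace = ∑ q : ι × ι, M q.1 q.2 * N q.1 q.2 := by
  simp only [Matrix.trace, Matrix.diag, Matrix.mul_apply, Matrix.transpose_apply,
    Fintype.sum_prod_type]
  rw [Finset.sum_comm]

lemma ch_trace_sq (M : Matrix ι ι ℝ) : (Mᵀ * M).trace = ∑ q : ι × ι, M q.1 q.2 ^ 2 := by
  simp only [ch_trace, sq]

/-- Linear combination of matrices. -/
noncomputable def ch_X (A : Fin n → Matrix ι ι ℝ) (y : EuclideanSpace ℝ (Fin n)) : Matrix ι ι ℝ :=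
  ∑ i, y i • A i

lemma ch_X_apply (A : Fin n → Matrix ι ι ℝ) (y : EuclideanSpace ℝ (Fin n)) (a b : ι) :
    ch_X A y a b = ∑ i, y i * A i a b := by
  simp [ch_X, Matrix.sum_apply]

lemma ch_bessel (A : Fin n → Matrix ι ι ℝ) (S : Finset (Fin n)) {k : ℕ}
    (u : Fin k → EuclideanSpace ℝ (Fin n)) (hu : Orthonormal ℝ u)
    (hS : ∀ i, ∀ j ∉ S, u i j = 0) :
    ∑ i, ((ch_X A (u i))ᵀ * ch_X A (u i)).trace ≤ ∑ j ∈ S, ((A j)ᵀ * A j).trace := by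
  simp only [ch_trace_sq]
  rw [Finset.sum_comm, Finset.sum_comm (s := S)]
  refine Finset.sum_le_sum fun q _ => ?_
  let a : EuclideanSpace ℝ (Fin n) := WithLp.toLp 2 fun j => if j ∈ S then A j q.1 q.2 else 0
  have h := hu.sum_inner_products_le a (s := Finset.univ)
  have e1 : ∀ i, ch_X A (u i) q.1 q.2 = inner ℝ (u i) a := by
    intro i
    rw [ch_X_apply, PiLp.inner_apply]
    refine Finset.sum_congr rfl fun j _ => ?_
    by_cases hj : j ∈ S
    · simp [a, hj, mul_comm]
    · simp [a, hj, hS i j hj]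
  have e2 : ‖a‖ ^ 2 = ∑ j ∈ S, A j q.1 q.2 ^ 2 := by
    rw [EuclideanSpace.real_norm_sq_eq]
    simp [a, ite_pow]
  rw [← e2]
  simpa [e1] using h

lemma ch_exists (A : Fin n → Matrix ι ι ℝ) (S : Finset (Fin n)) (D : ℝ) (hD : 0 < D)
    (hA : ∀ j, ((A j)ᵀ * A j).trace ≤ D) :
    ∃ H : Submodule ℝ (EuclideanSpace ℝ (Fin n)), (∀ y ∈ H, ∀ i ∉ S, y i = 0) ∧
      9 * S.card ≤ 10 * Module.finrank ℝ H ∧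
      ∀ y ∈ H, ((ch_X A y)ᵀ * ch_X A y).trace ≤ 10 * D * ‖y‖ ^ 2 := by
  let P : ℕ → Prop := fun k => ∃ u : Fin k → EuclideanSpace ℝ (Fin n), Orthonormal ℝ u ∧
    (∀ i, ∀ j ∉ S, u i j = 0) ∧ ∀ i, 10 * D < ((ch_X A (u i))ᵀ * ch_X A (u i)).trace
  have hP0 : P 0 := ⟨fun i => i.elim0, ⟨fun i => i.elim0, fun i => i.elim0⟩,
    fun i => i.elim0, fun i => i.elim0⟩
  have hPb : ∀ k, P k → 10 * k ≤ S.card := by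
    rintro k ⟨u, hu, hS, hb⟩
    have h1 := ch_bessel A S u hu hS
    have h2 : ∑ j ∈ S, ((A j)ᵀ * A j).trace ≤ S.card * D := by
      rw [← nsmul_eq_mul]
      exact Finset.sum_le_card_nsmul _ _ _ fun j _ => hA j
    have h3 : (k : ℝ) * (10 * D) ≤ ∑ i, ((ch_X A (u i))ᵀ * ch_X A (u i)).trace := by
      have := Finset.card_nsmul_le_sum Finset.univ
        (fun i => ((ch_X A (u i))ᵀ * ch_X A (u i)).trace) (10 * D) fun i _ => (hb i).le
      simpa using this
    have h4 : (10 * (k : ℝ)) * D ≤ S.card * D := by linarith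
    have h5 := le_of_mul_le_mul_right h4 hD
    exact_mod_cast h5
  obtain ⟨k, hk, hk1⟩ : ∃ k, P k ∧ ¬ P (k + 1) := by
    by_contra hcon
    push Not at hcon
    have : ∀ k, P k := fun k => Nat.rec hP0 hcon k
    have := hPb _ (this (S.card + 1))
    omega
  have hkS := hPb k hk
  obtain ⟨u, hu, hS, hb⟩ := hk
  let VS : Submodule ℝ (EuclideanSpace ℝ (Fin n)) :=
    Submodule.span ℝ (Set.range fun i : S => EuclideanSpace.single (i : Fin n) (1 : ℝ))
  have hVS : ∀ y, y ∈ VS ↔ ∀ i ∉ S, y i = 0 := by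
    intro y
    constructor
    · intro hy
      induction hy using Submodule.span_induction with
      | mem x hx =>
        obtain ⟨i, rfl⟩ := hx
        intro j hj
        have : j ≠ i := fun h => hj (h ▸ i.2)
        simp [this]
      | zero => simp
      | add x y _ _ hx hy => intro i hi; simp [hx i hi, hy i hi]
      | smul c x _ hx => intro i hi; simp [hx i hi]
    · intro hy
      have : y = ∑ i : S, y i • EuclideanSpace.single (i : Fin n) (1 : ℝ) := by
        ext j
        simp only [WithLp.ofLp_sum, WithLp.ofLp_smul, Finset.sum_apply, Pi.smul_apply,
          PiLp.single_apply, smul_eq_mul, mul_ite, mul_one, mul_zero]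
        by_cases hj : j ∈ S
        · rw [Finset.sum_eq_single ⟨j, hj⟩]
          · simp
          · intro b _ hb'
            rw [if_neg]
            intro h; exact hb' (Subtype.ext h.symm)
          · simp
        · rw [hy j hj, Finset.sum_eq_zero]
          intro b _
          rw [if_neg]
          intro h; exact hj (h ▸ b.2)
      rw [this]
      exact Submodule.sum_mem _ fun i _ => Submodule.smul_mem _ _
        (Submodule.subset_span ⟨i, rfl⟩)
  have hVSr : Module.finrank ℝ VS = S.card := by
    have hli : LinearIndependent ℝ fun i : S => EuclideanSpace.single (i : Fin n) (1 : ℝ) := by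
      have := (EuclideanSpace.orthonormal_single (𝕜 := ℝ) (ι := Fin n)).comp
        (fun i : S => (i : Fin n)) Subtype.val_injective
      exact this.linearIndependent
    have := finrank_span_eq_card hli
    simpa using this
  let U : Submodule ℝ (EuclideanSpace ℝ (Fin n)) := Submodule.span ℝ (Set.range u)
  have hUr : Module.finrank ℝ U ≤ k := by
    have := finrank_range_le_card (R := ℝ) u
    simpa [Set.finrank] using this
  have hUV : U ≤ VS := by
    rw [Submodule.span_le]
    rintro _ ⟨i, rfl⟩
    exact (hVS _).2 (hS i)
  have hdim := Submodule.finrank_add_inf_finrank_orthogonal hUV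
  refine ⟨Uᗮ ⊓ VS, fun y hy => (hVS y).1 hy.2, by omega, fun y hy => ?_⟩
  by_contra hcon
  push Not at hcon
  apply hk1
  have hy0 : y ≠ 0 := by
    rintro rfl
    simp [ch_X] at hcon
  have hny : 0 < ‖y‖ := norm_pos_iff.2 hy0
  have horth : ∀ i, inner ℝ (u i) y = 0 := fun i =>
    (Submodule.mem_orthogonal U y).1 hy.1 _ (Submodule.subset_span ⟨i, rfl⟩)
  refine ⟨Fin.cons (‖y‖⁻¹ • y) u, ⟨?_, ?_⟩, ?_, ?_⟩
  · intro i
    refine Fin.cases ?_ (fun i => ?_) i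
    · simp [norm_smul, hny.ne']
    · simpa using hu.1 i
  · intro i j
    refine Fin.cases ?_ (fun i => ?_) i <;> refine Fin.cases ?_ (fun j => ?_) j
    · simp
    · intro _
      simp only [Fin.cons_zero, Fin.cons_succ]
      rw [real_inner_comm, inner_smul_right, horth, mul_zero]
    · intro _
      simp only [Fin.cons_zero, Fin.cons_succ]
      rw [inner_smul_right, horth, mul_zero]
    · intro hij
      simp only [Fin.cons_succ]
      exact hu.2 fun h => hij (by rw [h])
  · intro i
    refine Fin.cases ?_ (fun i => ?_) i
    · intro j hj
      simp [(hVS y).1 hy.2 j hj]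
    · simpa using hS i
  · intro i
    refine Fin.cases ?_ (fun i => ?_) i
    · simp only [Fin.cons_zero]
      have : ch_X A (‖y‖⁻¹ • y) = ‖y‖⁻¹ • ch_X A y := by
        simp [ch_X, Finset.smul_sum, smul_smul]
      rw [this, Matrix.transpose_smul, Matrix.smul_mul, Matrix.mul_smul, Matrix.trace_smul,
        Matrix.trace_smul, smul_eq_mul, smul_eq_mul, ← mul_assoc]
      have h2 : ‖y‖⁻¹ * ‖y‖⁻¹ * ‖y‖ ^ 2 = 1 := by field_simp
      have h3 : 0 < ‖y‖⁻¹ * ‖y‖⁻¹ := by positivity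
      have h4 := mul_lt_mul_of_pos_left hcon h3
      calc 10 * D = ‖y‖⁻¹ * ‖y‖⁻¹ * (10 * D * ‖y‖ ^ 2) := by
            rw [show ‖y‖⁻¹ * ‖y‖⁻¹ * (10 * D * ‖y‖ ^ 2) = 10 * D * (‖y‖⁻¹ * ‖y‖⁻¹ * ‖y‖ ^ 2) by ring,
              h2, mul_one]
        _ < _ := h4
    · simpa using hb i

lemma ch_TB (A : Fin n → Matrix ι ι ℝ) (hsym : ∀ j, (A j)ᵀ = A j)
    (hA : ∀ j, ∀ M : Matrix ι ι ℝ, ((A j * M)ᵀ * (A j * M)).trace ≤ (Mᵀ * M).trace)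
    (S : Finset (Fin n)) (w : ℝ) (hw : 0 ≤ w) (H : Submodule ℝ (EuclideanSpace ℝ (Fin n)))
    (hHS : ∀ y ∈ H, ∀ i ∉ S, y i = 0)
    (hH : ∀ y ∈ H, ((ch_X A y)ᵀ * ch_X A y).trace ≤ w * ‖y‖ ^ 2) :
    TB (fun i => ch_X A (H.starProjection (EuclideanSpace.single i 1))) S.card w := by
  have key : ∀ (c : Fin n → ℝ) (i : Fin n),
      ∑ j, H.starProjection (EuclideanSpace.single i 1) j * c j =
        H.starProjection (WithLp.toLp 2 c) i := by
    intro c i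
    have h1 : inner ℝ (H.starProjection (EuclideanSpace.single i 1)) (WithLp.toLp 2 c) =
        inner ℝ (EuclideanSpace.single i (1 : ℝ)) (H.starProjection (WithLp.toLp 2 c)) :=
      H.inner_starProjection_left_eq_right _ _
    rw [PiLp.inner_apply, EuclideanSpace.inner_single_left] at h1
    simp only [map_one, one_mul] at h1
    rw [← h1]
    refine Finset.sum_congr rfl fun j _ => ?_
    simp [mul_comm]
  have proj : ∀ a : EuclideanSpace ℝ (Fin n), ‖H.starProjection a‖ ^ 2 =
      ∑ j, H.starProjection a j * a j := by
    intro a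
    have hm : H.starProjection (H.starProjection a) = H.starProjection a :=
      Submodule.starProjection_eq_self_iff.2 (Submodule.starProjection_apply_mem _ _)
    have h1 : inner ℝ (H.starProjection (H.starProjection a)) a =
        inner ℝ (H.starProjection a) (H.starProjection a) :=
      H.inner_starProjection_left_eq_right _ _
    rw [hm, real_inner_self_eq_norm_sq, PiLp.inner_apply] at h1
    rw [← h1]
    refine Finset.sum_congr rfl fun j _ => ?_
    simp [mul_comm]
  refine ⟨fun k => ?_, fun M => ?_, fun M => ?_⟩
  · simp only [ch_X, Matrix.transpose_sum, Matrix.transpose_smul, hsym]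
  · simp only [ch_trace_sq]
    have e : ∀ i (q : ι × ι), (ch_X A (H.starProjection (EuclideanSpace.single i 1)) * M) q.1 q.2 =
        H.starProjection (WithLp.toLp 2 fun j => (A j * M) q.1 q.2) i := by
      intro i q
      rw [← key, ch_X, Finset.sum_mul, Matrix.sum_apply]
      simp
    simp only [e]
    have h1 : ∀ a : EuclideanSpace ℝ (Fin n), ∑ i, H.starProjection a i ^ 2 ≤ ∑ j ∈ S, a j ^ 2 := by
      intro a
      have hz := hHS _ (Submodule.starProjection_apply_mem H a)
      have h2 : ∑ i, H.starProjection a i ^ 2 = ∑ j ∈ S, H.starProjection a j * a j := by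
        rw [← EuclideanSpace.real_norm_sq_eq, proj]
        symm
        refine Finset.sum_subset (Finset.subset_univ _) fun j _ hj => ?_
        rw [hz j hj, zero_mul]
      have h3 : ∑ i, H.starProjection a i ^ 2 = ∑ j ∈ S, H.starProjection a j ^ 2 := by
        symm
        refine Finset.sum_subset (Finset.subset_univ _) fun j _ hj => ?_
        rw [hz j hj]; simp
      have h4 : ∑ j ∈ S, 2 * (H.starProjection a j * a j) ≤
          ∑ j ∈ S, (H.starProjection a j ^ 2 + a j ^ 2) :=
        Finset.sum_le_sum fun j _ => by nlinarith [sq_nonneg (H.starProjection a j - a j)]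
      rw [← Finset.mul_sum, Finset.sum_add_distrib, ← h2, ← h3] at h4
      linarith
    rw [Finset.sum_comm]
    calc _ ≤ ∑ q : ι × ι, ∑ j ∈ S, (A j * M) q.1 q.2 ^ 2 :=
          Finset.sum_le_sum fun q _ => h1 _
      _ = ∑ j ∈ S, ∑ q : ι × ι, (A j * M) q.1 q.2 ^ 2 := Finset.sum_comm
      _ ≤ ∑ j ∈ S, (Mᵀ * M).trace := Finset.sum_le_sum fun j _ => by
          rw [← ch_trace_sq]; exact hA j M
      _ = _ := by rw [Finset.sum_const, nsmul_eq_mul, ch_trace_sq]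
  · set a : EuclideanSpace ℝ (Fin n) := WithLp.toLp 2 fun j => (Mᵀ * A j).trace with ha
    have e0 : ∀ y, (Mᵀ * ch_X A y).trace = ∑ j, y j * a j := by
      intro y
      simp [ch_X, Finset.mul_sum, Matrix.trace_sum, a]
    have e : ∀ i, (Mᵀ * ch_X A (H.starProjection (EuclideanSpace.single i 1))).trace =
        H.starProjection a i := by
      intro i
      rw [e0, ha, ← key]
    simp only [e]
    rw [← EuclideanSpace.real_norm_sq_eq]
    have h1 : ‖H.starProjection a‖ ^ 2 = (Mᵀ * ch_X A (H.starProjection a)).trace := by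
      rw [e0, proj]
    have h2 : (Mᵀ * ch_X A (H.starProjection a)).trace ^ 2 ≤
        (Mᵀ * M).trace * ((ch_X A (H.starProjection a))ᵀ * ch_X A (H.starProjection a)).trace := by
      rw [ch_trace, ch_trace_sq, ch_trace_sq]
      exact Finset.sum_mul_sq_le_sq_mul_sq _ _ _
    have h3 := hH _ (Submodule.starProjection_apply_mem H a)
    have h4 : 0 ≤ (Mᵀ * M).trace := by
      rw [ch_trace_sq]; exact Finset.sum_nonneg fun _ _ => sq_nonneg _
    have h5 := h2.trans (mul_le_mul_of_nonneg_left h3 h4)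
    rw [← h1] at h5
    generalize ‖H.starProjection a‖ ^ 2 = t at *
    by_contra hcon
    push Not at hcon
    have : 0 < t := lt_of_le_of_lt (mul_nonneg hw h4) hcon
    nlinarith

end ChoiceH
lemma ibp_integrable_pow (k : ℕ) : Integrable (fun x : ℝ => x ^ k) (gaussianReal 0 1) := by
  have h := (memLp_id_gaussianReal (μ := 0) (v := 1) (k : NNReal))
  rcases Nat.eq_zero_or_pos k with rfl | hk
  · simp
  · have h2 := h.integrable_norm_pow (p := k) (by omega)
    refine h2.mono (by fun_prop) (Filter.Eventually.of_forall fun x => ?_)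
    simp

lemma ibp_integrable_pow_pdf (k : ℕ) :
    Integrable (fun x : ℝ => x ^ k * gaussianPDFReal 0 1 x) := by
  have h := ibp_integrable_pow k
  rw [gaussianReal, if_neg one_ne_zero, integrable_withDensity_iff (measurable_gaussianPDF _ _)
    (Filter.Eventually.of_forall fun _ => gaussianPDF_lt_top)] at h
  simpa using h

lemma ibp_one_dim (k : ℕ) :
    ∫ x, x * x ^ k ∂(gaussianReal 0 1) = ∫ x, (k : ℝ) * x ^ (k - 1) ∂(gaussianReal 0 1) := by
  rw [integral_gaussianReal_eq_integral_smul one_ne_zero,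
    integral_gaussianReal_eq_integral_smul one_ne_zero]
  have hd : ∀ x : ℝ, HasDerivAt (fun x : ℝ => x ^ k * gaussianPDFReal 0 1 x)
      ((k : ℝ) * x ^ (k - 1) * gaussianPDFReal 0 1 x
        - x ^ (k + 1) * gaussianPDFReal 0 1 x) x := by
    intro x
    have h1 : HasDerivAt (fun x : ℝ => gaussianPDFReal 0 1 x) (-x * gaussianPDFReal 0 1 x) x := by
      simp only [gaussianPDFReal]
      have h2 : HasDerivAt (fun x : ℝ => -(x - 0) ^ 2 / (2 * ((1 : NNReal) : ℝ))) (-x) x := by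
        have := (((hasDerivAt_id x).sub_const 0).pow 2).neg.div_const (2 * ((1 : NNReal) : ℝ))
        refine HasDerivAt.congr_deriv this ?_
        simp
        ring
      refine HasDerivAt.congr_deriv ((h2.exp).const_mul _) ?_
      ring
    refine HasDerivAt.congr_deriv ((hasDerivAt_pow k x).mul h1) ?_
    ring
  have hi1 : Integrable (fun x : ℝ => (k : ℝ) * x ^ (k - 1) * gaussianPDFReal 0 1 x) := by
    simp_rw [mul_assoc]
    exact (ibp_integrable_pow_pdf _).const_mul _
  have hi2 := ibp_integrable_pow_pdf (k + 1)
  have := integral_eq_zero_of_hasDerivAt_of_integrable hd (hi1.sub hi2) (ibp_integrable_pow_pdf k)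
  rw [integral_sub hi1 hi2, sub_eq_zero] at this
  simp only [smul_eq_mul]
  calc _ = ∫ x, x ^ (k + 1) * gaussianPDFReal 0 1 x := by congr 1; ext x; ring
    _ = _ := by rw [← this]; congr 1; ext x; ring

/-- The standard Gaussian product measure. -/
noncomputable def gPi (n : ℕ) : Measure (Fin n → ℝ) := Measure.pi fun _ => gaussianReal 0 1

instance gPi_prob (n : ℕ) : IsProbabilityMeasure (gPi n) := by
  unfold gPi; infer_instance

lemma ibp_integrable_poly {n : ℕ} (P : MvPolynomial (Fin n) ℝ) :
    Integrable (fun x => MvPolynomial.eval x P) (gPi n) := by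
  induction P using MvPolynomial.induction_on' with
  | monomial s a =>
    simp only [MvPolynomial.eval_monomial]
    refine Integrable.const_mul ?_ a
    have : (fun x : Fin n → ℝ => s.prod fun i e => x i ^ e) = fun x => ∏ i, x i ^ s i := by
      ext x
      exact Finsupp.prod_fintype _ _ (by simp)
    rw [this]
    exact Integrable.fintype_prod (f := fun i (x : ℝ) => x ^ s i) fun i => ibp_integrable_pow _
  | add p q hp hq =>
    simp only [map_add]
    exact hp.add hq

/-- Gaussian expectation of a polynomial. -/
noncomputable def gE {n : ℕ} (P : MvPolynomial (Fin n) ℝ) : ℝ :=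
  ∫ x, MvPolynomial.eval x P ∂(gPi n)

lemma gE_add {n : ℕ} (P Q : MvPolynomial (Fin n) ℝ) : gE (P + Q) = gE P + gE Q := by
  simp only [gE, map_add]
  exact integral_add (ibp_integrable_poly P) (ibp_integrable_poly Q)

lemma gE_sum {n : ℕ} {ι : Type*} (s : Finset ι) (P : ι → MvPolynomial (Fin n) ℝ) :
    gE (∑ i ∈ s, P i) = ∑ i ∈ s, gE (P i) := by
  simp only [gE, map_sum]
  exact integral_finsetSum _ fun i _ => ibp_integrable_poly _

lemma gE_C_mul {n : ℕ} (c : ℝ) (P : MvPolynomial (Fin n) ℝ) :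
    gE (MvPolynomial.C c * P) = c * gE P := by
  simp only [gE, map_mul, MvPolynomial.eval_C]
  exact integral_const_mul _ _

lemma gE_mono {n : ℕ} {P Q : MvPolynomial (Fin n) ℝ}
    (h : ∀ x, MvPolynomial.eval x P ≤ MvPolynomial.eval x Q) : gE P ≤ gE Q :=
  integral_mono (ibp_integrable_poly P) (ibp_integrable_poly Q) h

lemma gE_monomial {n : ℕ} (s : Fin n →₀ ℕ) (a : ℝ) :
    gE (MvPolynomial.monomial s a) = a * ∏ i, ∫ x, x ^ s i ∂(gaussianReal 0 1) := by
  simp only [gE, MvPolynomial.eval_monomial]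
  rw [integral_const_mul]
  congr 1
  have : (fun x : Fin n → ℝ => s.prod fun i e => x i ^ e) = fun x => ∏ i, x i ^ s i := by
    ext x
    exact Finsupp.prod_fintype _ _ (by simp)
  rw [this]
  exact integral_fintype_prod_eq_prod (f := fun i (x : ℝ) => x ^ s i)

lemma gE_ibp {n : ℕ} (j : Fin n) (P : MvPolynomial (Fin n) ℝ) :
    gE (MvPolynomial.X j * P) = gE (MvPolynomial.pderiv j P) := by
  induction P using MvPolynomial.induction_on' with
  | monomial s a =>
    rw [MvPolynomial.pderiv_monomial, mul_comm, ← pow_one (MvPolynomial.X j),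
      MvPolynomial.X, MvPolynomial.monomial_pow, MvPolynomial.monomial_mul, gE_monomial,
      gE_monomial]
    rw [← Finset.mul_prod_erase _ _ (Finset.mem_univ j),
      ← Finset.mul_prod_erase _ _ (Finset.mem_univ j)]
    have h1 : ∀ i ∈ Finset.univ.erase j,
        (∫ x, x ^ (s + 1 • Finsupp.single j 1 : Fin n →₀ ℕ) i ∂(gaussianReal 0 1)) =
        ∫ x, x ^ (s - Finsupp.single j 1 : Fin n →₀ ℕ) i ∂(gaussianReal 0 1) := by
      intro i hi
      have : i ≠ j := Finset.ne_of_mem_erase hi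
      simp [this.symm]
    rw [Finset.prod_congr rfl h1]
    have h2 := ibp_one_dim (s j)
    rw [integral_const_mul] at h2
    have h3 : (∫ x, x ^ (s + 1 • Finsupp.single j 1 : Fin n →₀ ℕ) j ∂(gaussianReal 0 1)) =
        s j * ∫ x, x ^ (s - Finsupp.single j 1 : Fin n →₀ ℕ) j ∂(gaussianReal 0 1) := by
      simp only [one_smul, Finsupp.coe_add, Pi.add_apply, Finsupp.single_eq_same,
        Finsupp.coe_tsub, Pi.sub_apply]
      rw [← h2]
      congr 1; ext x; ring
    rw [h3]; ring
  | add p q hp hq =>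
    rw [mul_add, gE_add, hp, hq, map_add, gE_add]
section Moments
set_option linter.unusedSectionVars false
open Matrix
variable {n : ℕ} {ι : Type*} [Fintype ι] [DecidableEq ι]

/-- Constant polynomial matrix. -/
noncomputable def cm (M : Matrix ι ι ℝ) : Matrix ι ι (MvPolynomial (Fin n) ℝ) :=
  (MvPolynomial.C : ℝ →+* MvPolynomial (Fin n) ℝ).mapMatrix M

/-- The generic linear polynomial matrix. -/
noncomputable def xp (B : Fin n → Matrix ι ι ℝ) : Matrix ι ι (MvPolynomial (Fin n) ℝ) :=
  ∑ k, (MvPolynomial.X k : MvPolynomial (Fin n) ℝ) • cm (B k)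

/-- Entrywise partial derivative. -/
noncomputable def dm (j : Fin n) (M : Matrix ι ι (MvPolynomial (Fin n) ℝ)) :
    Matrix ι ι (MvPolynomial (Fin n) ℝ) := M.map (MvPolynomial.pderiv j)

lemma dm_mul (j : Fin n) (M N : Matrix ι ι (MvPolynomial (Fin n) ℝ)) :
    dm j (M * N) = dm j M * N + M * dm j N := by
  ext1 a b
  simp only [dm, Matrix.map_apply, Matrix.add_apply, Matrix.mul_apply, map_sum,
    Derivation.leibniz, smul_eq_mul]
  rw [← Finset.sum_add_distrib]
  exact Finset.sum_congr rfl fun c _ => by ring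

lemma dm_cm (j : Fin n) (M : Matrix ι ι ℝ) : dm j (cm M) = 0 := by
  ext1 a b
  simp [dm, cm]

lemma dm_xp (j : Fin n) (B : Fin n → Matrix ι ι ℝ) : dm j (xp B) = cm (B j) := by
  ext1 a b
  simp only [dm, xp, cm, Matrix.map_apply, Matrix.sum_apply, Matrix.smul_apply, map_sum,
    smul_eq_mul, Derivation.leibniz, RingHom.mapMatrix_apply, MvPolynomial.pderiv_C,
    MvPolynomial.pderiv_X, mul_zero, zero_add]
  rw [Finset.sum_eq_single j]
  · simp
  · intro k _ hk
    simp [hk]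
  · simp

lemma dm_xp_pow (j : Fin n) (B : Fin n → Matrix ι ι ℝ) (r : ℕ) :
    dm j (xp B ^ r) = ∑ a ∈ Finset.range r, xp B ^ a * cm (B j) * xp B ^ (r - 1 - a) := by
  induction r with
  | zero =>
    ext1 a b
    by_cases hab : a = b <;> simp [dm, hab]
  | succ r ih =>
    rw [pow_succ, dm_mul, ih, dm_xp, Finset.sum_range_succ, Finset.sum_mul]
    refine congrArg₂ (· + ·) ?_ ?_
    · refine Finset.sum_congr rfl fun a ha => ?_
      have : r + 1 - 1 - a = (r - 1 - a) + 1 := by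
        have := Finset.mem_range.mp ha; omega
      rw [this, pow_succ]
      simp only [mul_assoc]
    · simp

lemma gE_ibp_trace (B : Fin n → Matrix ι ι ℝ) (N : Matrix ι ι (MvPolynomial (Fin n) ℝ)) :
    gE (xp B * N).trace = ∑ k, gE (cm (B k) * dm k N).trace := by
  have e1 : (xp B * N).trace = ∑ k, MvPolynomial.X k * (cm (B k) * N).trace := by
    simp only [xp, Finset.sum_mul, Matrix.trace_sum, Matrix.smul_mul, Matrix.trace_smul,
      smul_eq_mul]
  rw [e1, gE_sum]
  refine Finset.sum_congr rfl fun k _ => ?_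
  rw [gE_ibp]
  congr 1
  have : MvPolynomial.pderiv k (cm (B k) * N).trace = (dm k (cm (B k) * N)).trace := by
    simp [Matrix.trace, dm]
  rw [this, dm_mul, dm_cm, zero_mul, zero_add]

/-- Evaluate a polynomial matrix. -/
noncomputable def evm (x : Fin n → ℝ) : Matrix ι ι (MvPolynomial (Fin n) ℝ) →+* Matrix ι ι ℝ :=
  (MvPolynomial.eval x).mapMatrix

lemma eval_trace (x : Fin n → ℝ) (N : Matrix ι ι (MvPolynomial (Fin n) ℝ)) :
    MvPolynomial.eval x N.trace = (evm x N).trace := by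
  simp [Matrix.trace, evm]

lemma evm_cm (x : Fin n → ℝ) (M : Matrix ι ι ℝ) : evm x (cm M) = M := by
  ext a b
  simp [evm, cm]

lemma evm_xp (x : Fin n → ℝ) (B : Fin n → Matrix ι ι ℝ) : evm x (xp B) = ∑ k, x k • B k := by
  ext a b
  simp [evm, xp, cm, Matrix.sum_apply]

lemma evm_symm {B : Fin n → Matrix ι ι ℝ} (hB : ∀ k, (B k)ᵀ = B k) (x : Fin n → ℝ) :
    (evm x (xp B))ᵀ = evm x (xp B) := by
  rw [evm_xp, Matrix.transpose_sum]
  simp only [Matrix.transpose_smul, hB]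

/-- Trace moments. -/
noncomputable def mom (B : Fin n → Matrix ι ι ℝ) (r : ℕ) : ℝ := gE (xp B ^ r).trace

lemma mom_nonneg {B : Fin n → Matrix ι ι ℝ} (hB : ∀ k, (B k)ᵀ = B k) {r : ℕ} (hr : Even r) :
    0 ≤ mom B r := by
  refine integral_nonneg fun x => ?_
  simp only [Pi.zero_apply]
  rw [eval_trace, map_pow]
  obtain ⟨φ, ht, hs, y, hy⟩ := ti_diag _ (evm_symm hB x)
  rw [← ht, map_pow, hy, ti_trace_pow]
  exact Finset.sum_nonneg fun a _ => hr.pow_nonneg _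

lemma mom_ibp (B : Fin n → Matrix ι ι ℝ) (r : ℕ) :
    mom B (r + 1) = ∑ a ∈ Finset.range r,
      gE (∑ k, (cm (B k) * xp B ^ a * cm (B k) * xp B ^ (r - 1 - a)).trace) := by
  rw [mom, pow_succ', gE_ibp_trace]
  simp only [dm_xp_pow, Finset.mul_sum, Matrix.trace_sum, gE_sum]
  rw [Finset.sum_comm]
  simp only [mul_assoc]

lemma mom_I1 {B : Fin n → Matrix ι ι ℝ} {s w : ℝ} (h : TB B s w) (p q : ℕ) (hpq : Even (p + q)) :
    gE (∑ k, (cm (B k) * xp B ^ p * cm (B k) * xp B ^ q).trace) ≤ 2 * s * mom B (p + q) := by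
  rw [mom, ← gE_C_mul]
  refine gE_mono fun x => ?_
  simp only [map_sum, map_mul, eval_trace, map_pow, evm_cm, MvPolynomial.eval_C]
  exact ti_I1 h (evm_symm h.symm x) p q hpq

lemma mom_I2 {B : Fin n → Matrix ι ι ℝ} {s w : ℝ} (h : TB B s w) (p q : ℕ) (hpq : Even (p + q)) :
    gE (∑ k, (cm (B k) * xp B ^ (p + 2) * cm (B k) * xp B ^ (q + 2)).trace) ≤
      2 * gE (∑ k, (cm (B k) * xp B ^ 2 * cm (B k) * xp B ^ (p + q + 2)).trace) := by
  rw [← gE_C_mul]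
  refine gE_mono fun x => ?_
  simp only [map_sum, map_mul, eval_trace, map_pow, evm_cm, MvPolynomial.eval_C]
  exact ti_I2 h (evm_symm h.symm x) p q hpq

lemma mom_I3 {B : Fin n → Matrix ι ι ℝ} {s w : ℝ} (h : TB B s w) (hs : 0 ≤ s) (m : ℕ)
    (hm : Even m) :
    gE (∑ k, ∑ j, (cm (B k) * cm (B j) * cm (B j) * cm (B k) * xp B ^ m).trace) ≤
      s ^ 2 * mom B m := by
  rw [mom, ← gE_C_mul]
  refine gE_mono fun x => ?_
  simp only [map_sum, map_mul, eval_trace, map_pow, evm_cm, MvPolynomial.eval_C]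
  exact ti_I3 h hs (evm_symm h.symm x) m hm

lemma mom_I4 {B : Fin n → Matrix ι ι ℝ} {s w : ℝ} (h : TB B s w) (hw : 0 ≤ w) (p q : ℕ)
    (hpq : Even (1 + p + q)) :
    gE (∑ k, ∑ j, (cm (B k) * cm (B j) * xp B * cm (B k) * xp B ^ p * cm (B j)
      * xp B ^ q).trace) ≤ 3 * (w * s) * mom B (1 + p + q) := by
  rw [mom, ← gE_C_mul]
  refine gE_mono fun x => ?_
  simp only [map_sum, map_mul, eval_trace, map_pow, evm_cm]
  simp only [map_ofNat, MvPolynomial.eval_C]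
  exact ti_I4 h hw (evm_symm h.symm x) p q hpq

lemma mom_Q_eq (B : Fin n → Matrix ι ι ℝ) (m : ℕ) :
    gE (∑ k, (cm (B k) * xp B ^ 2 * cm (B k) * xp B ^ m).trace) =
      gE (∑ k, ∑ j, (cm (B k) * cm (B j) * cm (B j) * cm (B k) * xp B ^ m).trace) +
      ∑ a ∈ Finset.range m, gE (∑ k, ∑ j, (cm (B k) * cm (B j) * xp B * cm (B k) * xp B ^ a
        * cm (B j) * xp B ^ (m - 1 - a)).trace) := by
  have e1 : ∀ k, (cm (B k) * xp B ^ 2 * cm (B k) * xp B ^ m).trace =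
      (xp B * (xp B * cm (B k) * xp B ^ m * cm (B k))).trace := by
    intro k
    have : cm (B k) * xp B ^ 2 * cm (B k) * xp B ^ m =
      cm (B k) * (xp B * (xp B * cm (B k) * xp B ^ m)) := by
      rw [sq]; simp only [mul_assoc]
    rw [this, Matrix.trace_mul_comm]
    simp only [mul_assoc]
  have e2 : ∀ k j, (cm (B j) * dm j (xp B * cm (B k) * xp B ^ m * cm (B k))).trace =
      (cm (B k) * cm (B j) * cm (B j) * cm (B k) * xp B ^ m).trace +
      ∑ a ∈ Finset.range m, (cm (B k) * cm (B j) * xp B * cm (B k) * xp B ^ a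
        * cm (B j) * xp B ^ (m - 1 - a)).trace := by
    intro k j
    rw [dm_mul, dm_cm, dm_mul, dm_mul, dm_cm, dm_xp, dm_xp_pow]
    simp only [mul_zero, add_zero, add_mul, mul_add, Matrix.trace_add]
    congr 1
    · rw [← mul_assoc, Matrix.trace_mul_comm]
      simp only [mul_assoc]
    · rw [← mul_assoc, Matrix.trace_mul_comm]
      simp only [Finset.mul_sum, Matrix.trace_sum, mul_assoc]
  simp only [e1, gE_sum, gE_ibp_trace, e2, gE_add, Finset.sum_add_distrib]
  congr 1
  conv_rhs => rw [Finset.sum_comm]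
  exact Finset.sum_congr rfl fun k _ => Finset.sum_comm

lemma mom_Q {B : Fin n → Matrix ι ι ℝ} {s w : ℝ} (h : TB B s w) (hs : 0 ≤ s) (hw : 0 ≤ w) (m : ℕ)
    (hm : Even m) :
    gE (∑ k, (cm (B k) * xp B ^ 2 * cm (B k) * xp B ^ m).trace) ≤
      (s ^ 2 + 3 * m * (w * s)) * mom B m := by
  rw [mom_Q_eq]
  have h1 := mom_I3 h hs m hm
  have h2 : ∑ a ∈ Finset.range m, gE (∑ k, ∑ j, (cm (B k) * cm (B j) * xp B * cm (B k) * xp B ^ a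
        * cm (B j) * xp B ^ (m - 1 - a)).trace) ≤ ∑ a ∈ Finset.range m, 3 * (w * s) * mom B m := by
    refine Finset.sum_le_sum fun a ha => ?_
    have e : 1 + a + (m - 1 - a) = m := by
      have := Finset.mem_range.mp ha; omega
    have := mom_I4 h hw a (m - 1 - a) (by rw [e]; exact hm)
    rwa [e] at this
  rw [Finset.sum_const, Finset.card_range, nsmul_eq_mul] at h2
  linarith

lemma mom_rec {B : Fin n → Matrix ι ι ℝ} {s w : ℝ} (h : TB B s w) (hs : 0 ≤ s) (hw : 0 ≤ w) (m : ℕ)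
    (hm : Even m) :
    mom B (m + 4) ≤ 8 * s * mom B (m + 2) +
      2 * (m + 3) * ((s ^ 2 + 3 * m * (w * s)) * mom B m) := by
  have hm2 : Even (m + 2) := hm.add even_two
  have hM := mom_nonneg h.symm hm
  have hM2 := mom_nonneg h.symm hm2
  set Q := (s ^ 2 + 3 * m * (w * s)) * mom B m with hQ
  have hQ0 : 0 ≤ Q := by positivity
  have hQ1 := mom_Q h hs hw m hm
  rw [← hQ] at hQ1
  have hsM : 0 ≤ 2 * s * mom B (m + 2) := by positivity
  rw [show m + 4 = (m + 3) + 1 by ring, mom_ibp]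
  have key : ∀ a ∈ Finset.range (m + 3),
      gE (∑ k, (cm (B k) * xp B ^ a * cm (B k) * xp B ^ (m + 3 - 1 - a)).trace) ≤
      (((if a = 0 then 2 * s * mom B (m + 2) else 0) +
        (if a = 1 then 2 * s * mom B (m + 2) else 0)) +
        ((if a = m + 1 then 2 * s * mom B (m + 2) else 0) +
        (if a = m + 2 then 2 * s * mom B (m + 2) else 0))) + 2 * Q := by
    intro a ha
    have ha' := Finset.mem_range.mp ha
    by_cases hc : a = 0 ∨ a = 1 ∨ a = m + 1 ∨ a = m + 2
    · have e : a + (m + 3 - 1 - a) = m + 2 := by omega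
      have h1 := mom_I1 h a (m + 3 - 1 - a) (by rw [e]; exact hm2)
      rw [e] at h1
      refine h1.trans ?_
      split_ifs <;> first | (exfalso; omega) | linarith
    · have h1 := mom_I2 h (a - 2) (m - a) (by
        have : a - 2 + (m - a) + 2 = m := by omega
        rw [← this] at hm
        simpa [Nat.even_add] using hm)
      rw [show a - 2 + 2 = a by omega, show m - a + 2 = m + 3 - 1 - a by omega,
        show a - 2 + (m - a) + 2 = m by omega] at h1
      rw [if_neg (by omega), if_neg (by omega), if_neg (by omega), if_neg (by omega)]
      linarith
  refine (Finset.sum_le_sum key).trans ?_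
  simp only [Finset.sum_add_distrib, Finset.sum_ite_eq', Finset.sum_const, Finset.card_range,
    nsmul_eq_mul]
  rw [if_pos (by simp), if_pos (by simp), if_pos (by simp), if_pos (by simp)]
  push_cast
  linarith

lemma mom_zero (B : Fin n → Matrix ι ι ℝ) : mom B 0 = Fintype.card ι := by
  simp [mom, gE]

lemma mom_two {B : Fin n → Matrix ι ι ℝ} {s w : ℝ} (h : TB B s w) :
    mom B 2 ≤ 2 * s * Fintype.card ι := by
  rw [mom_ibp, Finset.sum_range_one, ← mom_zero B]
  exact mom_I1 h 0 0 (by simp)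

lemma mom_bound {B : Fin n → Matrix ι ι ℝ} {s w K L : ℝ} (h : TB B s w) (hs : 0 ≤ s) (hw : 0 ≤ w)
    (hK : 2 * s ≤ K ^ 2) (hK4 : 8 * s * K ^ 2 + 2 * L * (s ^ 2 + 3 * L * (w * s)) ≤ K ^ 4) (p : ℕ)
    (hp : 2 * (p : ℝ) ≤ L) : mom B (2 * p) ≤ Fintype.card ι * K ^ (2 * p) := by
  induction p using Nat.strong_induction_on with
  | _ p ih =>
    match p, ih, hp with
    | 0, _, _ => simp [mom_zero]
    | 1, _, _ =>
      have := mom_two h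
      have hc : (0 : ℝ) ≤ Fintype.card ι := by positivity
      calc mom B (2 * 1) ≤ 2 * s * Fintype.card ι := this
        _ ≤ K ^ 2 * Fintype.card ι := by gcongr
        _ = _ := by ring
    | q + 2, ih, hp =>
      push_cast at hp
      have h1 := ih (q + 1) (by omega) (by push_cast; linarith)
      have h0 := ih q (by omega) (by linarith)
      have hr := mom_rec h hs hw (2 * q) (by simp)
      rw [show 2 * q + 4 = 2 * (q + 2) by ring, show 2 * q + 2 = 2 * (q + 1) by ring] at hr
      refine hr.trans ?_
      have hq : (0 : ℝ) ≤ q := by positivity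
      have hL : 0 ≤ L := by linarith
      have hM := mom_nonneg h.symm (r := 2 * q) (by simp)
      push_cast
      have hc : (0 : ℝ) ≤ Fintype.card ι * K ^ (2 * q) := hM.trans h0
      calc _ ≤ 8 * s * (Fintype.card ι * K ^ (2 * (q + 1))) +
          2 * L * ((s ^ 2 + 3 * L * (w * s)) * (Fintype.card ι * K ^ (2 * q))) := by
            gcongr <;> linarith
        _ = (Fintype.card ι * K ^ (2 * q)) *
            (8 * s * K ^ 2 + 2 * L * (s ^ 2 + 3 * L * (w * s))) := by ring
        _ ≤ (Fintype.card ι * K ^ (2 * q)) * K ^ 4 := by gcongr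
        _ = _ := by ring

end Moments
section NormBound
open Matrix
variable {n d : ℕ}
set_option linter.unusedSectionVars false

lemma nb_opNorm (M : Matrix (Fin d) (Fin d) ℝ) :
    opNorm M = ‖Matrix.toEuclideanCLM (n := Fin d) (𝕜 := ℝ) M‖ := rfl

lemma nb_apply_sq (M : Matrix (Fin d) (Fin d) ℝ) (v : EuclideanSpace ℝ (Fin d)) :
    ‖Matrix.toEuclideanCLM (n := Fin d) (𝕜 := ℝ) M v‖ ^ 2 = ∑ i, (∑ j, M i j * v j) ^ 2 := by
  rw [EuclideanSpace.real_norm_sq_eq]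
  refine Finset.sum_congr rfl fun i _ => ?_
  rw [Matrix.ofLp_toEuclideanCLM]
  rfl

lemma nb_frob (M : Matrix (Fin d) (Fin d) ℝ) : opNorm M ^ 2 ≤ (Mᵀ * M).trace := by
  have h0 : 0 ≤ (Mᵀ * M).trace := by
    rw [ch_trace_sq]; exact Finset.sum_nonneg fun _ _ => sq_nonneg _
  have h1 : opNorm M ≤ Real.sqrt (Mᵀ * M).trace := by
    rw [nb_opNorm]
    refine ContinuousLinearMap.opNorm_le_bound _ (Real.sqrt_nonneg _) fun v => ?_
    refine abs_le_of_sq_le_sq' ?_ (by positivity) |>.2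
    rw [nb_apply_sq, mul_pow, Real.sq_sqrt h0, EuclideanSpace.real_norm_sq_eq, ch_trace_sq,
      Fintype.sum_prod_type, Finset.sum_mul]
    exact Finset.sum_le_sum fun i _ => Finset.sum_mul_sq_le_sq_mul_sq _ _ _
  calc opNorm M ^ 2 ≤ Real.sqrt (Mᵀ * M).trace ^ 2 := by
        have : 0 ≤ opNorm M := norm_nonneg _
        gcongr
    _ = _ := Real.sq_sqrt h0

lemma nb_contract {A : Matrix (Fin d) (Fin d) ℝ} (hA : opNorm A ≤ 1) (M : Matrix (Fin d) (Fin d) ℝ) :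
    ((A * M)ᵀ * (A * M)).trace ≤ (Mᵀ * M).trace := by
  rw [ch_trace_sq, ch_trace_sq, Fintype.sum_prod_type_right, Fintype.sum_prod_type_right]
  refine Finset.sum_le_sum fun b _ => ?_
  let v : EuclideanSpace ℝ (Fin d) := WithLp.toLp 2 fun j => M j b
  have h1 : ‖Matrix.toEuclideanCLM (n := Fin d) (𝕜 := ℝ) A v‖ ≤ 1 * ‖v‖ :=
    ContinuousLinearMap.le_of_opNorm_le _ hA v
  rw [one_mul] at h1
  have h2 := pow_le_pow_left₀ (norm_nonneg _) h1 2
  rw [nb_apply_sq, EuclideanSpace.real_norm_sq_eq] at h2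
  simpa [Matrix.mul_apply, v] using h2

lemma nb_frob_le {A : Matrix (Fin d) (Fin d) ℝ} (hA : opNorm A ≤ 1) :
    (Aᵀ * A).trace ≤ d := by
  have := nb_contract hA 1
  simpa using this

lemma nb_pow {X : Matrix (Fin d) (Fin d) ℝ} (hX : Xᵀ = X) (j : ℕ) :
    opNorm X ^ (2 * 2 ^ j) ≤ (X ^ (2 * 2 ^ j)).trace := by
  have hsa : IsSelfAdjoint (Matrix.toEuclideanCLM (n := Fin d) (𝕜 := ℝ) X) := by
    rw [IsSelfAdjoint, ← map_star, star_eq_conjTranspose, conjTranspose_eq_transpose_of_trivial, hX]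
  have h1 := IsSelfAdjoint.norm_pow_two_pow
    (E := EuclideanSpace ℝ (Fin d) →L[ℝ] EuclideanSpace ℝ (Fin d)) hsa j
  rw [← map_pow] at h1
  have h2 := nb_frob (X ^ 2 ^ j)
  rw [nb_opNorm, h1, ← pow_mul, Matrix.transpose_pow, hX, ← pow_add] at h2
  rw [nb_opNorm, mul_comm]
  rw [← mul_two] at h2
  exact h2

lemma nb_pt {x K : ℝ} (hK : 0 < K) (hx : 0 ≤ x) (r : ℕ) (hr : 1 ≤ r) :
    x ≤ K * (1 + x ^ r / K ^ r) := by
  rcases le_total x K with h | h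
  · have : 0 ≤ x ^ r / K ^ r := by positivity
    nlinarith
  · have h1 : 1 ≤ x / K := (one_le_div hK).2 h
    have h2 : x / K ≤ (x / K) ^ r := le_self_pow₀ h1 (by omega)
    rw [← div_pow]
    have h3 : x = K * (x / K) := by field_simp
    nlinarith

lemma nb_expect {B : Fin n → Matrix (Fin d) (Fin d) ℝ} {s w K L : ℝ} (h : TB B s w) (hs : 0 ≤ s)
    (hw : 0 ≤ w) (hK0 : 0 < K)
    (hK : 2 * s ≤ K ^ 2) (hK4 : 8 * s * K ^ 2 + 2 * L * (s ^ 2 + 3 * L * (w * s)) ≤ K ^ 4) (j : ℕ)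
    (hj : 2 * (2 ^ j : ℝ) ≤ L) (hd : (d : ℝ) ≤ 3 ^ (2 * 2 ^ j)) :
    ∫ g, opNorm (∑ k, g k • B k) ∂(gPi n) ≤ 6 * K := by
  have hmom := mom_bound h hs hw hK hK4 (2 ^ j) (by push_cast; exact hj)
  set r := 2 * 2 ^ j with hr
  have hr1 : 1 ≤ r := by have := Nat.one_le_two_pow (n := j); omega
  have hi : Integrable (fun g => MvPolynomial.eval g (xp B ^ r).trace) (gPi n) :=
    ibp_integrable_poly _
  have h1 : ∫ g, opNorm (∑ k, g k • B k) ∂(gPi n) ≤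
      ∫ g, (3 * K) * (1 + MvPolynomial.eval g (xp B ^ r).trace / (3 * K) ^ r) ∂(gPi n) := by
    refine integral_mono_of_nonneg (Filter.Eventually.of_forall fun g => norm_nonneg _) ?_
      (Filter.Eventually.of_forall fun g => ?_)
    · exact ((integrable_const _).add (hi.div_const _)).const_mul _
    · have h2 := nb_pow (evm_symm h.symm g) j
      have h3 := nb_pt (x := opNorm (∑ k, g k • B k)) (K := 3 * K) (by positivity)
        (norm_nonneg _) r hr1
      refine h3.trans ?_
      simp only [eval_trace, map_pow]
      rw [evm_xp] at h2 ⊢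
      gcongr
  refine h1.trans ?_
  rw [integral_const_mul, integral_add (integrable_const _) (hi.div_const _), integral_div]
  have e : ∫ g, MvPolynomial.eval g (xp B ^ r).trace ∂(gPi n) = mom B r := rfl
  rw [e, Fintype.card_fin] at *
  have h5 : mom B r / (3 * K) ^ r ≤ 1 := by
    rw [div_le_one (by positivity), mul_pow]
    refine hmom.trans ?_
    gcongr
  simp only [integral_const, probReal_univ, smul_eq_mul, mul_one]
  nlinarith

end NormBound
section Assemble
open Matrix
variable {n d : ℕ}

/-- The matrix pencil as a continuous linear map. -/
noncomputable def asT (A : Fin n → Matrix (Fin d) (Fin d) ℝ) :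
    EuclideanSpace ℝ (Fin n) →L[ℝ] (EuclideanSpace ℝ (Fin d) →L[ℝ] EuclideanSpace ℝ (Fin d)) :=
  ∑ i, (EuclideanSpace.proj (𝕜 := ℝ) i).smulRight
    (Matrix.toEuclideanCLM (n := Fin d) (𝕜 := ℝ) (A i))

lemma asT_apply (A : Fin n → Matrix (Fin d) (Fin d) ℝ) (y : EuclideanSpace ℝ (Fin n)) :
    asT A y = Matrix.toEuclideanCLM (n := Fin d) (𝕜 := ℝ) (ch_X A y) := by
  simp [asT, ch_X]

lemma asT_norm (A : Fin n → Matrix (Fin d) (Fin d) ℝ) (y : EuclideanSpace ℝ (Fin n)) :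
    ‖asT A y‖ = opNorm (ch_X A y) := by rw [asT_apply, nb_opNorm]

lemma as_expect (A : Fin n → Matrix (Fin d) (Fin d) ℝ)
    (H : Submodule ℝ (EuclideanSpace ℝ (Fin n))) :
    ∫ g, ‖asT A (H.starProjection g)‖ ∂(stdGaussian (EuclideanSpace ℝ (Fin n))) =
      ∫ g, opNorm (∑ k, g k • ch_X A (H.starProjection (EuclideanSpace.single k 1))) ∂(gPi n) := by
  rw [← map_pi_eq_stdGaussian, integral_map (by fun_prop) (by fun_prop)]
  refine integral_congr_ae (Filter.Eventually.of_forall fun g => ?_)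
  simp only
  rw [nb_opNorm, map_sum]
  congr 1
  have : (WithLp.toLp 2 g : EuclideanSpace ℝ (Fin n)) =
      ∑ k, g k • EuclideanSpace.single k (1 : ℝ) := by
    ext j
    simp [Pi.single_apply]
  rw [this]
  simp [map_sum, asT_apply]

lemma as_numeric {l D s : ℝ} (hl : 0.69 ≤ l) (hD : 0 ≤ D) (hs : 0 < s) :
    let K := 10 * (l ^ ((1 : ℝ) / 4) * Real.sqrt s + l ^ ((1 : ℝ) / 2) * (s * D) ^ ((1 : ℝ) / 4))
    0 < K ∧ 2 * s ≤ K ^ 2 ∧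
    8 * s * K ^ 2 + 2 * (8 * l) * (s ^ 2 + 3 * (8 * l) * (10 * D * s)) ≤ K ^ 4 := by
  intro K
  have hl0 : 0 < l := by linarith
  set U := l ^ ((1 : ℝ) / 4) * Real.sqrt s with hU
  set V := l ^ ((1 : ℝ) / 2) * (s * D) ^ ((1 : ℝ) / 4) with hV
  have hU0 : 0 < U := by positivity
  have hV0 : 0 ≤ V := by positivity
  have hq : (l ^ ((1 : ℝ) / 4)) ^ 4 = l := by
    rw [← Real.rpow_natCast, ← Real.rpow_mul hl0.le]; norm_num
  have hh : (l ^ ((1 : ℝ) / 2)) ^ 2 = l := by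
    rw [← Real.rpow_natCast, ← Real.rpow_mul hl0.le]; norm_num
  have hsD : ((s * D) ^ ((1 : ℝ) / 4)) ^ 4 = s * D := by
    rw [← Real.rpow_natCast, ← Real.rpow_mul (by positivity)]; norm_num
  have hss : Real.sqrt s ^ 2 = s := Real.sq_sqrt hs.le
  have hU4 : U ^ 4 = l * s ^ 2 := by
    rw [hU, mul_pow, hq, show Real.sqrt s ^ 4 = (Real.sqrt s ^ 2) ^ 2 by ring, hss]
  have hV4 : V ^ 4 = l ^ 2 * (s * D) := by
    rw [hV, mul_pow, hsD,
      show (l ^ ((1 : ℝ) / 2)) ^ 4 = ((l ^ ((1 : ℝ) / 2)) ^ 2) ^ 2 by ring, hh]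
  have hU2 : 0.8 * s ≤ U ^ 2 := by
    refine abs_le_of_sq_le_sq' ?_ (by positivity) |>.2
    rw [← pow_mul, hU4]
    nlinarith [sq_nonneg s]
  have hK : K = 10 * (U + V) := rfl
  have hK0 : 0 < K := by rw [hK]; positivity
  have hK2 : 100 * U ^ 2 ≤ K ^ 2 := by
    rw [hK]; nlinarith [mul_nonneg hU0.le hV0, sq_nonneg V]
  have hK4 : 10000 * (U ^ 4 + V ^ 4) ≤ K ^ 4 := by
    have : U ^ 4 + V ^ 4 ≤ (U + V) ^ 4 := by
      have h1 : 0 ≤ U ^ 3 * V := by positivity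
      have h2 : 0 ≤ U ^ 2 * V ^ 2 := by positivity
      have h3 : 0 ≤ U * V ^ 3 := by positivity
      nlinarith
    rw [hK]; nlinarith
  refine ⟨hK0, by linarith, ?_⟩
  have h1 : 16 * s ≤ K ^ 2 := by linarith
  have h2 : 8 * s * K ^ 2 ≤ K ^ 4 / 2 := by nlinarith [sq_nonneg K]
  have h3 : 2 * (8 * l) * (s ^ 2 + 3 * (8 * l) * (10 * D * s)) = 16 * U ^ 4 + 3840 * V ^ 4 := by
    rw [hU4, hV4]; ring
  have : 0 ≤ U ^ 4 := by positivity
  have : 0 ≤ V ^ 4 := by positivity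
  linarith

lemma as_half {l D : ℝ} (hl : 0 ≤ l) (hD : 0 ≤ D) (m m' : ℕ) (h : 2 * m' ≤ m) :
    l ^ ((1 : ℝ) / 4) * Real.sqrt m' + l ^ ((1 : ℝ) / 2) * (m' * D) ^ ((1 : ℝ) / 4) ≤
    0.85 * (l ^ ((1 : ℝ) / 4) * Real.sqrt m + l ^ ((1 : ℝ) / 2) * (m * D) ^ ((1 : ℝ) / 4)) := by
  have h' : 2 * (m' : ℝ) ≤ m := by exact_mod_cast h
  have h1 : Real.sqrt m' ≤ 0.85 * Real.sqrt m := by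
    rw [Real.sqrt_le_left (by positivity), mul_pow, Real.sq_sqrt (by positivity)]
    nlinarith [(Nat.cast_nonneg m' : (0 : ℝ) ≤ m')]
  have h2 : (m' * D) ^ ((1 : ℝ) / 4) ≤ 0.85 * (m * D) ^ ((1 : ℝ) / 4) := by
    have e : (0.85 : ℝ) = (0.85 ^ 4 : ℝ) ^ ((1 : ℝ) / 4) := by
      rw [← Real.rpow_natCast, ← Real.rpow_mul (by norm_num)]; norm_num
    rw [e, ← Real.mul_rpow (by positivity) (by positivity)]
    refine Real.rpow_le_rpow (by positivity) ?_ (by norm_num)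
    have h3 : (m' : ℝ) ≤ 0.85 ^ 4 * m := by
      have : (0 : ℝ) ≤ m := Nat.cast_nonneg m
      norm_num
      linarith
    calc (m' : ℝ) * D ≤ (0.85 ^ 4 * m) * D := by gcongr
      _ = _ := by ring
  have a := mul_le_mul_of_nonneg_left h1 (by positivity : 0 ≤ l ^ ((1 : ℝ) / 4))
  have b := mul_le_mul_of_nonneg_left h2 (by positivity : 0 ≤ l ^ ((1 : ℝ) / 2))
  linarith

lemma as_pow {l : ℝ} (hl : 0.69 ≤ l) : ∃ j : ℕ, l ≤ 2 ^ j ∧ (2 : ℝ) ^ j ≤ 4 * l := by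
  rcases le_total l 1 with h | h
  · exact ⟨0, by simpa using h, by norm_num; linarith⟩
  · obtain ⟨j, h1, h2⟩ := exists_nat_pow_near h (by norm_num : (1 : ℝ) < 2)
    exact ⟨j + 1, h2.le, by rw [pow_succ]; linarith⟩

end Assemble

theorem discrepancy_beats_random_coloring :
    ∃ C : ℝ, 0 < C ∧ ∀ (n d : ℕ), 2 ≤ n → 2 ≤ d →
      ∀ A : Fin n → Matrix (Fin d) (Fin d) ℝ,
        (∀ i, (A i).IsSymm) → (∀ i, opNorm (A i) ≤ 1) →
        ∃ x : Fin n → ℝ, (∀ i, x i = 1 ∨ x i = -1) ∧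
          opNorm (∑ i, x i • A i) ≤
            C * ((Real.log d) ^ ((1 : ℝ) / 4) * Real.sqrt n +
              (Real.log d) ^ ((1 : ℝ) / 2) * ((n : ℝ) * d) ^ ((1 : ℝ) / 4)) := by
  refine ⟨1200, by norm_num, fun n d hn hd A hsym hop => ?_⟩
  set l := Real.log d with hl
  have hd2 : (2 : ℝ) ≤ d := by exact_mod_cast hd
  have hl1 : 0.69 ≤ l := by
    have h1 := Real.log_le_log (by norm_num) hd2
    have h2 := Real.log_two_gt_d9
    have h3 : (0.69 : ℝ) ≤ 0.6931471803 := by norm_num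
    linarith
  have hl0 : 0 < l := by linarith
  have hd0 : (0 : ℝ) < d := by linarith
  obtain ⟨j, hj1, hj2⟩ := as_pow hl1
  have hd3 : (d : ℝ) ≤ 3 ^ (2 * 2 ^ j) := by
    calc (d : ℝ) = Real.exp l := (Real.exp_log hd0).symm
      _ ≤ Real.exp ((2 ^ j : ℕ) : ℝ) := Real.exp_le_exp.2 (by push_cast; exact hj1)
      _ = Real.exp 1 ^ (2 ^ j) := by rw [← Real.exp_nat_mul, mul_one]
      _ ≤ 3 ^ (2 ^ j) := by
        gcongr
        have h1 := Real.exp_one_lt_d9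
        have h3 : (2.7182818286 : ℝ) ≤ 3 := by norm_num
        linarith
      _ ≤ 3 ^ (2 * 2 ^ j) := pow_le_pow_right₀ (by norm_num) (by omega)
  let R : ℕ → ℝ := fun m => 60 * (l ^ ((1 : ℝ) / 4) * Real.sqrt m +
    l ^ ((1 : ℝ) / 2) * ((m : ℝ) * d) ^ ((1 : ℝ) / 4))
  have hfull := pc_full (asT A) R 20 (fun m => by positivity) (fun m hm => by
      have : (0 : ℝ) < m := by exact_mod_cast hm
      positivity) (by norm_num)
    (fun m m' h => by
      have := as_half hl0.le hd0.le m m' h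
      simp only [R]
      linarith)
    (fun S hS => by
      have hSc : (0 : ℝ) < S.card := by exact_mod_cast hS.card_pos
      obtain ⟨H, h1, h2, h3⟩ := ch_exists A S d hd0 (fun j => nb_frob_le (hop j))
      refine ⟨H, h1, h2, ?_⟩
      have hTB := ch_TB A hsym (fun j M => nb_contract (hop j) M) S (10 * d) (by positivity) H h1 h3
      obtain ⟨k1, k2, k3⟩ := as_numeric hl1 hd0.le hSc
      rw [as_expect]
      refine (nb_expect hTB hSc.le (by positivity) k1 k2 k3 j (by linarith) hd3).trans ?_
      simp only [R]
      linarith)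
    _ Finset.univ le_rfl 0 (by simp) (by simp)
  obtain ⟨x, hx1, hx2⟩ := hfull
  refine ⟨fun i => x i, fun i => eq_or_eq_neg_of_abs_eq (hx1 i), ?_⟩
  rw [asT_norm, map_zero, norm_zero, zero_add, Finset.card_univ, Fintype.card_fin] at hx2
  refine hx2.trans (le_of_eq ?_)
  simp only [R]
  ring
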